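/- Let A be a dg algebra with enough idempotents. The canonical localization functor q : H(A) → D(A) from the homotopy category to the derived category has both a left adjoint Π : D(A) → H(A) and a right adjoint Υ : D(A) → H(A), both of which are triangulated and fully faithful. The essential image of Π consists of homotopically projective dg modules (those P with Hom_{H(A)}(P, N) = 0 for all acyclic N) and the essential image of Υ consists of homotopically injective dg modules (those I with Hom_{H(A)}(N, I) = 0 for all acyclic N). -/

import Mathlib

open DirectSum

noncomputable section

/-- The Koszul sign `(-1)^n` for an integer `n`. -/
def sgn (n : ℤ) : ℤ := ((-1 : ℤˣ) ^ n : ℤˣ)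

/-- A differential graded algebra with enough idempotents over the commutative
ground ring `K`:  a (possibly non-unital) associative `K`-algebra with a
`ℤ`-grading (given by an internal direct sum of `K`-submodules), a distinguished
family of nonzero orthogonal homogeneous idempotents of degree `0` such that
`A = ⊕ eᵢA = ⊕ Aeᵢ`, and a square-zero differential of degree `+1` which kills
the distinguished idempotents and satisfies the graded Leibniz rule. -/
structure DGAlgebra (K : Type) [CommRing K] : Type 1 where
  carrier : Type
  [ring : NonUnitalRing carrier]
  [mod : Module K carrier]
  [smulComm : SMulCommClass K carrier carrier]
  [tower : IsScalarTower K carrier carrier]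
  deg : ℤ → Submodule K carrier
  internal : DirectSum.IsInternal deg
  mul_mem : ∀ {i j : ℤ} {a b : carrier}, a ∈ deg i → b ∈ deg j → a * b ∈ deg (i + j)
  ι : Type
  [decEq : DecidableEq ι]
  e : ι → carrier
  e_ne : ∀ i, e i ≠ 0
  e_idem : ∀ i, e i * e i = e i
  e_orth : ∀ {i j : ι}, i ≠ j → e i * e j = 0
  e_deg : ∀ i, e i ∈ deg 0
  enough_left : DirectSum.IsInternal fun i =>
    Submodule.map (LinearMap.mulLeft K (e i)) (⊤ : Submodule K carrier)
  enough_right : DirectSum.IsInternal fun i =>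
    Submodule.map (LinearMap.mulRight K (e i)) (⊤ : Submodule K carrier)
  d : carrier →ₗ[K] carrier
  d_deg : ∀ {i : ℤ} {a : carrier}, a ∈ deg i → d a ∈ deg (i + 1)
  d_sq : ∀ a, d (d a) = 0
  d_e : ∀ i, d (e i) = 0
  leibniz : ∀ {i : ℤ} {a : carrier}, a ∈ deg i → ∀ b : carrier,
    d (a * b) = d a * b + sgn i • (a * d b)

attribute [instance] DGAlgebra.ring DGAlgebra.mod DGAlgebra.smulComm
  DGAlgebra.tower DGAlgebra.decEq

variable (K : Type) [CommRing K]

/-- A (unitary) right differential graded module over a dg algebra with enough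
idempotents `A`: a graded `K`-module with a right `A`-action (written as a
`K`-bilinear map `act`), compatible with the gradings, unitary
(`M = ⊕ M·eᵢ` internally), together with a square-zero degree `+1`
differential satisfying the graded Leibniz rule. -/
structure DGMod (A : DGAlgebra K) : Type 1 where
  carrier : Type
  [addgrp : AddCommGroup carrier]
  [mod : Module K carrier]
  deg : ℤ → Submodule K carrier
  internal : DirectSum.IsInternal deg
  act : carrier →ₗ[K] A.carrier →ₗ[K] carrier
  act_act : ∀ (x : carrier) (a b : A.carrier), act (act x a) b = act x (a * b)
  act_deg : ∀ {i j : ℤ} {x : carrier} {a : A.carrier},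
    x ∈ deg i → a ∈ A.deg j → act x a ∈ deg (i + j)
  unital : DirectSum.IsInternal fun i =>
    Submodule.map (act.flip (A.e i)) (⊤ : Submodule K carrier)
  d : carrier →ₗ[K] carrier
  d_deg : ∀ {i : ℤ} {x : carrier}, x ∈ deg i → d x ∈ deg (i + 1)
  d_sq : ∀ x, d (d x) = 0
  leibniz : ∀ {i : ℤ} {x : carrier}, x ∈ deg i → ∀ a : A.carrier,
    d (act x a) = act (d x) a + sgn i • act x (A.d a)

attribute [instance] DGMod.addgrp DGMod.mod

variable {K}

/-- The `K`-submodule `HOM_A(M,N)^n` of homogeneous `A`-linear maps of degree `n`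
between right dg `A`-modules: graded maps raising degrees by `n` which commute
with the right `A`-action. -/
def homDeg {A : DGAlgebra K} (M N : DGMod K A) (n : ℤ) :
    Submodule K (M.carrier →ₗ[K] N.carrier) where
  carrier := { f | (∀ (k : ℤ) (x : M.carrier), x ∈ M.deg k → f x ∈ N.deg (k + n)) ∧
      ∀ (x : M.carrier) (a : A.carrier), f (M.act x a) = N.act (f x) a }
  add_mem' := by
    rintro f g ⟨hf1, hf2⟩ ⟨hg1, hg2⟩
    refine ⟨fun k x hx => ?_, fun x a => ?_⟩
    · simpa using Submodule.add_mem _ (hf1 k x hx) (hg1 k x hx)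
    · simp [hf2 x a, hg2 x a]
  zero_mem' := by
    refine ⟨fun k x _ => by simp, fun x a => by simp⟩
  smul_mem' := by
    rintro c f ⟨hf1, hf2⟩
    refine ⟨fun k x hx => ?_, fun x a => ?_⟩
    · simpa using Submodule.smul_mem _ c (hf1 k x hx)
    · simp [hf2 x a]

/-- The differential of a Hom-complex, on maps regarded as homogeneous of
degree `n`: `D(f) = d_N ∘ f - (-1)^n • (f ∘ d_M)`. -/
def Dmap {M N : Type} [AddCommGroup M] [Module K M]
    [AddCommGroup N] [Module K N] (dM : M →ₗ[K] M) (dN : N →ₗ[K] N) (n : ℤ)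
    (f : M →ₗ[K] N) : M →ₗ[K] N :=
  dN ∘ₗ f - sgn n • (f ∘ₗ dM)

/-- The differential of the Hom-complex `HOM_A(M,N)`, on maps regarded as
homogeneous of degree `n`:  `d(f) = d_N ∘ f - (-1)^n f ∘ d_M`. -/
def Dhom {A : DGAlgebra K} (M N : DGMod K A) (n : ℤ)
    (f : M.carrier →ₗ[K] N.carrier) : M.carrier →ₗ[K] N.carrier :=
  Dmap M.d N.d n f

lemma homDeg_comp {A : DGAlgebra K} {M N P : DGMod K A} {m n : ℤ}
    {g : N.carrier →ₗ[K] P.carrier} {f : M.carrier →ₗ[K] N.carrier}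
    (hg : g ∈ homDeg N P m) (hf : f ∈ homDeg M N n) :
    g ∘ₗ f ∈ homDeg M P (m + n) := by
  refine ⟨fun k x hx => ?_, fun x a => ?_⟩
  · have := hg.1 _ _ (hf.1 k x hx)
    rwa [show k + n + m = k + (m + n) by ring] at this
  · simp [LinearMap.comp_apply, hf.2 x a, hg.2]

open CategoryTheory

variable {K : Type} [CommRing K]

/-- A morphism in the category `C(A) = Z⁰(Dg-A)`: a degree-zero homogeneous
`A`-linear map commuting with the differentials (a chain map). -/
structure CMap {A : DGAlgebra K} (M N : DGMod K A) : Type where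
  toFun : M.carrier →ₗ[K] N.carrier
  mem : toFun ∈ homDeg M N 0
  comm : ∀ x, toFun (M.d x) = N.d (toFun x)

@[ext] lemma CMap.ext {A : DGAlgebra K} {M N : DGMod K A} {f g : CMap M N}
    (h : f.toFun = g.toFun) : f = g := by
  cases f; cases g; simpa using h

/-- The category `C(A)` of right dg `A`-modules with chain maps as morphisms. -/
abbrev DGModCat (K : Type) [CommRing K] (A : DGAlgebra K) := DGMod K A

instance {A : DGAlgebra K} : Category (DGModCat K A) where
  Hom M N := CMap M N
  id M := ⟨LinearMap.id,
    ⟨fun k x hx => by simpa using hx, fun _ _ => rfl⟩, fun _ => rfl⟩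
  comp f g := ⟨g.toFun ∘ₗ f.toFun,
    by simpa using homDeg_comp g.mem f.mem,
    fun x => by simp [LinearMap.comp_apply, f.comm, g.comm]⟩
  id_comp f := CMap.ext rfl
  comp_id f := CMap.ext rfl
  assoc f g h := CMap.ext rfl

lemma DGModCat.comp_toFun {A : DGAlgebra K} {M N P : DGModCat K A}
    (f : M ⟶ N) (g : N ⟶ P) : (f ≫ g).toFun = g.toFun ∘ₗ f.toFun := rfl

/-- A chain map is null-homotopic when it is of the form `d∘σ + σ∘d` for a
homogeneous `A`-linear map `σ` of degree `-1`. -/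
def IsNullHomotopic {A : DGAlgebra K} {M N : DGMod K A} (f : CMap M N) : Prop :=
  ∃ σ : M.carrier →ₗ[K] N.carrier, σ ∈ homDeg M N (-1) ∧
    f.toFun = N.d ∘ₗ σ + σ ∘ₗ M.d

/-- The homotopy relation on `C(A)`. -/
def htpyRel (K : Type) [CommRing K] (A : DGAlgebra K) : HomRel (DGModCat K A) :=
  fun _ _ f g => ∃ σ, σ ∈ homDeg _ _ (-1) ∧
    f.toFun - g.toFun = _root_.DGMod.d _ ∘ₗ σ + σ ∘ₗ _root_.DGMod.d _

/-- The homotopy category `H(A)` of the dg algebra with enough idempotents `A`. -/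
abbrev HtpyCat (K : Type) [CommRing K] (A : DGAlgebra K) :=
  CategoryTheory.Quotient (htpyRel K A)

/-- The projection functor `C(A) → H(A)`. -/
def htpyQ (K : Type) [CommRing K] (A : DGAlgebra K) :
    DGModCat K A ⥤ HtpyCat K A :=
  CategoryTheory.Quotient.functor (htpyRel K A)

/-- A right dg module is acyclic when all its homology vanishes: every
homogeneous cycle is the boundary of a homogeneous element. -/
def IsAcyclic {A : DGAlgebra K} (M : DGMod K A) : Prop :=
  ∀ (n : ℤ) (x : M.carrier), x ∈ M.deg n → M.d x = 0 →
    ∃ y ∈ M.deg (n - 1), M.d y = x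

/-- A chain map is a quasi-isomorphism when it induces isomorphisms on all
homology modules. -/
def IsQis {A : DGAlgebra K} {M N : DGMod K A} (f : CMap M N) : Prop :=
  (∀ (n : ℤ) (x : M.carrier), x ∈ M.deg n → M.d x = 0 →
      (∃ z, f.toFun x = N.d z) → ∃ w, x = M.d w) ∧
  (∀ (n : ℤ) (y : N.carrier), y ∈ N.deg n → N.d y = 0 →
      ∃ x z, x ∈ M.deg n ∧ M.d x = 0 ∧ y = f.toFun x + N.d z)

/-- Quasi-isomorphisms, as a class of morphisms of the homotopy category. -/
def qis (K : Type) [CommRing K] (A : DGAlgebra K) : MorphismProperty (HtpyCat K A) :=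
  fun M N φ => ∃ f : CMap M.as N.as, ((htpyQ K A).map f = φ) ∧ IsQis f

/-- The derived category `D(A)`: the localization of the homotopy category
`H(A)` at the class of quasi-isomorphisms. -/
abbrev DerivedCat (K : Type) [CommRing K] (A : DGAlgebra K) :=
  (qis K A).Localization

/-- The localization functor `q : H(A) → D(A)`. -/
def derQ (K : Type) [CommRing K] (A : DGAlgebra K) : HtpyCat K A ⥤ DerivedCat K A :=
  (qis K A).Q

/-- A pair of composable chain maps is a conflation of the semi-split exact
structure on `C(A)` when it is a short exact sequence of dg modules which
splits in the category of graded `A`-modules. -/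
def IsConflation {A : DGAlgebra K} {L M N : DGModCat K A}
    (u : L ⟶ M) (v : M ⟶ N) : Prop :=
  Function.Injective u.toFun ∧ Function.Surjective v.toFun ∧
    LinearMap.range u.toFun = LinearMap.ker v.toFun ∧
    ∃ r : M.carrier →ₗ[K] L.carrier, r ∈ homDeg M L 0 ∧ r ∘ₗ u.toFun = LinearMap.id

/-- `C` "is" the cone `C(1_M)` of the identity of `M`: it is the twisted direct
sum `M ⊕ M[1]` with differential given in matrix form by `[[d_M, 1],[0, -d_M]]`. -/
def IsConeOfId {A : DGAlgebra K} (M C : DGMod K A) : Prop :=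
  ∃ eC : C.carrier ≃ₗ[K] (M.carrier × M.carrier),
    (∀ (n : ℤ) (x : C.carrier), x ∈ C.deg n ↔
        ((eC x).1 ∈ M.deg n ∧ (eC x).2 ∈ M.deg (n + 1))) ∧
    (∀ (x : C.carrier) (a : A.carrier),
        eC (C.act x a) = (M.act (eC x).1 a, M.act (eC x).2 a)) ∧
    (∀ x : C.carrier,
        eC (C.d x) = (M.d (eC x).1 + (eC x).2, - M.d (eC x).2))

/-- A dg module is contractible when it is a direct summand, in `C(A)`, of a
cone of an identity morphism. -/
def IsContractible {A : DGAlgebra K} (P : DGModCat K A) : Prop :=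
  ∃ (M C : DGModCat K A) (_ : IsConeOfId M C) (s : P ⟶ C) (r : C ⟶ P),
    s ≫ r = 𝟙 P

/-- `N` "is" the shift `M[1]` of the dg module `M`. -/
structure ShiftWitness {A : DGAlgebra K} (M N : DGMod K A) : Type where
  eqv : N.carrier ≃ₗ[K] M.carrier
  deg : ∀ (n : ℤ) (x : N.carrier), x ∈ N.deg n ↔ eqv x ∈ M.deg (n + 1)
  act : ∀ x a, eqv (N.act x a) = M.act (eqv x) a
  d : ∀ x, eqv (N.d x) = - M.d (eqv x)

/-- A right dg module `P` is homotopically projective when every chain map from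
`P` to an acyclic dg module is null-homotopic, i.e. `Hom_{H(A)}(P,?)` vanishes
on acyclic modules. -/
def IsHtpyProj {A : DGAlgebra K} (P : DGMod K A) : Prop :=
  ∀ N : DGMod K A, IsAcyclic N → ∀ f : CMap P N, IsNullHomotopic f

/-- A right dg module `I` is homotopically injective when every chain map from
an acyclic dg module to `I` is null-homotopic. -/
def IsHtpyInj {A : DGAlgebra K} (I : DGMod K A) : Prop :=
  ∀ N : DGMod K A, IsAcyclic N → ∀ f : CMap N I, IsNullHomotopic f

open CategoryTheory.Pretriangulated

/-- A witness that the localization functor `q : H(A) → D(A)` has a triangulated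
fully faithful left adjoint `Π` (the homotopically projective resolution
functor) and a triangulated fully faithful right adjoint `Υ` (the homotopically
injective resolution functor), whose essential images consist of homotopically
projective, resp. homotopically injective, dg modules.  The (quantified)
triangulated structures involved are required to be the canonical ones: the
suspension of `H(A)` is induced by the shift of dg modules, the distinguished
triangles of `H(A)` come from conflations, and those of `D(A)` are the images
of the distinguished triangles of `H(A)`. -/
structure ResolutionAdjointsWitness (K : Type) [CommRing K] (A : DGAlgebra K) where
  [preH : Preadditive (HtpyCat K A)]
  [zoH : Limits.HasZeroObject (HtpyCat K A)]
  [hsH : HasShift (HtpyCat K A) ℤ]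
  [addH : ∀ n : ℤ, (shiftFunctor (HtpyCat K A) n).Additive]
  [ptH : Pretriangulated (HtpyCat K A)]
  [preD : Preadditive (DerivedCat K A)]
  [zoD : Limits.HasZeroObject (DerivedCat K A)]
  [hsD : HasShift (DerivedCat K A) ℤ]
  [addD : ∀ n : ℤ, (shiftFunctor (DerivedCat K A) n).Additive]
  [ptD : Pretriangulated (DerivedCat K A)]
  shift_obj : ∀ M : HtpyCat K A,
    Nonempty (ShiftWitness M.as ((shiftFunctor (HtpyCat K A) (1 : ℤ)).obj M).as)
  distH_of_conflation : ∀ {L M N : DGModCat K A} (u : L ⟶ M) (v : M ⟶ N),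
    IsConflation u v →
    ∃ w : (htpyQ K A).obj N ⟶ (shiftFunctor (HtpyCat K A) (1 : ℤ)).obj ((htpyQ K A).obj L),
      Triangle.mk ((htpyQ K A).map u) ((htpyQ K A).map v) w ∈
        (distinguishedTriangles : Set (Triangle (HtpyCat K A)))
  [csQ : (derQ K A).CommShift ℤ]
  distD_char : ∀ T : Triangle (DerivedCat K A),
    T ∈ (distinguishedTriangles : Set (Triangle (DerivedCat K A))) ↔
      ∃ T' ∈ (distinguishedTriangles : Set (Triangle (HtpyCat K A))),
        Nonempty (T ≅ (derQ K A).mapTriangle.obj T')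
  Pi : DerivedCat K A ⥤ HtpyCat K A
  adjPi : Pi ⊣ derQ K A
  [csPi : Pi.CommShift ℤ]
  trPi : Pi.IsTriangulated
  fullPi : Pi.Full
  faithfulPi : Pi.Faithful
  imagePi : ∀ Y : DerivedCat K A, IsHtpyProj (Pi.obj Y).as
  Ups : DerivedCat K A ⥤ HtpyCat K A
  adjUps : derQ K A ⊣ Ups
  [csUps : Ups.CommShift ℤ]
  trUps : Ups.IsTriangulated
  fullUps : Ups.Full
  faithfulUps : Ups.Faithful
  imageUps : ∀ Y : DerivedCat K A, IsHtpyInj (Ups.obj Y).as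

-- MYHELPERS
section

variable {K : Type} [CommRing K]

/-! ### Internal direct sums -/
section Internal
variable {J : Type} [DecidableEq J] {V W : Type} [AddCommGroup V] [Module K V]
  [AddCommGroup W] [Module K W] {D : J → Submodule K V}

/-- linear map out of an internal direct sum -/
def glift (h : DirectSum.IsInternal D) (φ : J → V →ₗ[K] W) : V →ₗ[K] W :=
  (DirectSum.toModule K J W fun j => (φ j) ∘ₗ (D j).subtype) ∘ₗ
    (LinearEquiv.ofBijective (DirectSum.coeLinearMap D) h).symm.toLinearMap

lemma glift_of_mem (h : DirectSum.IsInternal D) (φ : J → V →ₗ[K] W) {j : J} {x : V}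
    (hx : x ∈ D j) : glift h φ x = φ j x := by
  have : (LinearEquiv.ofBijective (DirectSum.coeLinearMap D) h).symm x =
      DirectSum.lof K J (fun j => D j) j ⟨x, hx⟩ := by
    rw [LinearEquiv.symm_apply_eq]
    exact (DirectSum.coeLinearMap_lof D j ⟨x, hx⟩).symm
  simp [glift, this]

lemma internal_induction (h : DirectSum.IsInternal D) {P : V → Prop}
    (hom : ∀ j, ∀ x ∈ D j, P x) (add : ∀ x y, P x → P y → P (x + y)) (zero : P 0) (x : V) : P x := by
  have : x ∈ ⨆ j, D j := by rw [h.submodule_iSup_eq_top]; trivial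
  exact Submodule.iSup_induction D (motive := P) this hom zero add

lemma internal_ext (h : DirectSum.IsInternal D) {f g : V →ₗ[K] W}
    (hom : ∀ j, ∀ x ∈ D j, f x = g x) : f = g := by
  ext x
  induction x using internal_induction h with
  | hom j x hx => exact hom j x hx
  | add x y hx hy => simp [hx, hy]
  | zero => simp

/-- projections -/
def gproj (h : DirectSum.IsInternal D) (j : J) : V →ₗ[K] V :=
  glift h (fun i => if i = j then LinearMap.id else 0)

lemma gproj_of_mem (h : DirectSum.IsInternal D) {j : J} {x : V} (hx : x ∈ D j) :
    gproj h j x = x := by simp [gproj, glift_of_mem h _ hx]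

lemma gproj_ne (h : DirectSum.IsInternal D) {i j : J} {x : V} (hx : x ∈ D i) (hij : i ≠ j) :
    gproj h j x = 0 := by simp [gproj, glift_of_mem h _ hx, hij]

lemma gproj_mem (h : DirectSum.IsInternal D) (j : J) (x : V) : gproj h j x ∈ D j := by
  induction x using internal_induction h with
  | hom i x hx =>
    by_cases hij : i = j
    · subst hij; rwa [gproj_of_mem h hx]
    · rw [gproj_ne h hx hij]; exact zero_mem _
  | add x y hx hy => rw [map_add]; exact add_mem hx hy
  | zero => simp

lemma eq_zero_of_gproj (h : DirectSum.IsInternal D) (x : V) (hx : ∀ j, gproj h j x = 0) : x = 0 := by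
  classical
  have key : ∀ x : V, ∃ F : Finset J, ∀ G, F ⊆ G → ∑ j ∈ G, gproj h j x = x := by
    intro x
    induction x using internal_induction h with
    | hom i x hx =>
      refine ⟨{i}, fun G hG => ?_⟩
      rw [Finset.sum_eq_single_of_mem i (hG (by simp)), gproj_of_mem h hx]
      intro j _ hj
      exact gproj_ne h hx hj.symm
    | add x y hx hy =>
      obtain ⟨F, hF⟩ := hx
      obtain ⟨F', hF'⟩ := hy
      refine ⟨F ∪ F', fun G hG => ?_⟩
      simp only [map_add, Finset.sum_add_distrib]
      rw [hF G (Finset.union_subset_left hG), hF' G (Finset.union_subset_right hG)]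
    | zero => exact ⟨∅, by simp⟩
  obtain ⟨F, hF⟩ := key x
  rw [← hF F subset_rfl]
  exact Finset.sum_eq_zero fun j _ => hx j

lemma internal_of_proj (pr : J → V →ₗ[K] V)
    (h1 : ∀ j x, x ∈ D j → pr j x = x)
    (h2 : ∀ i j x, x ∈ D i → i ≠ j → pr j x = 0) (h3 : ∀ x, x ∈ ⨆ j, D j) :
    DirectSum.IsInternal D := by
  rw [DirectSum.isInternal_submodule_iff_iSupIndep_and_iSup_eq_top]
  refine ⟨?_, by ext x; simp [h3]⟩
  intro j
  rw [Submodule.disjoint_def]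
  intro x hx hx'
  have : (⨆ i, ⨆ (_ : i ≠ j), D i) ≤ LinearMap.ker (pr j) := by
    refine iSup₂_le fun i hi y hy => ?_
    exact h2 i j y hy hi
  rw [← h1 j x hx]
  exact this hx'

end Internal

lemma sgn_add (m n : ℤ) : sgn (m + n) = sgn m * sgn n := by simp [sgn, zpow_add]
@[simp] lemma sgn_zero : sgn 0 = 1 := by simp [sgn]
@[simp] lemma sgn_one : sgn 1 = -1 := by simp [sgn]
@[simp] lemma sgn_neg_one : sgn (-1) = -1 := by simp [sgn]
@[simp] lemma sgn_mul_self (n : ℤ) : sgn n * sgn n = 1 := by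
  simp only [sgn, ← Units.val_mul]; simp
lemma sgn_neg (n : ℤ) : sgn (-n) = sgn n := by simp [sgn]
lemma sgn_cases (n : ℤ) : sgn n = 1 ∨ sgn n = -1 := by
  unfold sgn
  rcases Int.units_eq_one_or ((-1 : ℤˣ) ^ n) with h | h <;> simp [h]
@[simp] lemma sgn_smul_smul {V : Type} [AddCommGroup V] (n : ℤ) (x : V) : sgn n • sgn n • x = x := by
  rw [smul_smul, sgn_mul_self, one_smul]

/-! ### Pre-dg-modules: no finiteness conditions -/
structure PreDG (A : DGAlgebra K) : Type 1 where
  carrier : Type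
  [addgrp : AddCommGroup carrier]
  [mod : Module K carrier]
  deg : ℤ → Submodule K carrier
  p : ℤ → carrier →ₗ[K] carrier
  p_mem : ∀ n x, p n x ∈ deg n
  p_of_mem : ∀ {n x}, x ∈ deg n → p n x = x
  p_ne : ∀ {m n x}, x ∈ deg m → m ≠ n → p n x = 0
  act : carrier →ₗ[K] A.carrier →ₗ[K] carrier
  act_act : ∀ (x : carrier) (a b : A.carrier), act (act x a) b = act x (a * b)
  act_deg : ∀ {i j : ℤ} {x : carrier} {a : A.carrier},
    x ∈ deg i → a ∈ A.deg j → act x a ∈ deg (i + j)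
  d : carrier →ₗ[K] carrier
  d_deg : ∀ {i : ℤ} {x : carrier}, x ∈ deg i → d x ∈ deg (i + 1)
  d_sq : ∀ x, d (d x) = 0
  leibniz : ∀ {i : ℤ} {x : carrier}, x ∈ deg i → ∀ a : A.carrier,
    d (act x a) = act (d x) a + sgn i • act x (A.d a)

attribute [instance] PreDG.addgrp PreDG.mod

variable {A : DGAlgebra K}

/-- A pre-dg-module satisfying the finiteness conditions is a dg module. -/
@[reducible] def PreDG.toDGMod (V : PreDG A) (h1 : ∀ x, x ∈ ⨆ n, V.deg n)
    (h2 : ∀ x, x ∈ ⨆ i, Submodule.map (V.act.flip (A.e i)) (⊤ : Submodule K V.carrier)) :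
    DGMod K A where
  carrier := V.carrier
  deg := V.deg
  internal := internal_of_proj V.p (fun _ _ h => V.p_of_mem h) (fun _ _ _ h h' => V.p_ne h h') h1
  act := V.act
  act_act := V.act_act
  act_deg := V.act_deg
  unital := internal_of_proj (fun i => V.act.flip (A.e i))
    (by rintro i _ ⟨x, -, rfl⟩; simp [V.act_act, A.e_idem])
    (by rintro i j _ ⟨x, -, rfl⟩ hij; simp [V.act_act, A.e_orth hij]) h2
  d := V.d
  d_deg := V.d_deg
  d_sq := V.d_sq
  leibniz := V.leibniz

namespace DGMod
variable (M : DGMod K A)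

def p (n : ℤ) : M.carrier →ₗ[K] M.carrier := gproj M.internal n
lemma p_mem (n : ℤ) (x : M.carrier) : M.p n x ∈ M.deg n := gproj_mem _ _ _
lemma p_of_mem {n : ℤ} {x : M.carrier} (h : x ∈ M.deg n) : M.p n x = x := gproj_of_mem _ h
lemma p_ne {m n : ℤ} {x : M.carrier} (h : x ∈ M.deg m) (h' : m ≠ n) : M.p n x = 0 :=
  gproj_ne _ h h'

/-- forget -/
@[reducible] def toPre : PreDG A where
  carrier := M.carrier
  deg := M.deg
  p := M.p
  p_mem := M.p_mem
  p_of_mem := M.p_of_mem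
  p_ne := M.p_ne
  act := M.act
  act_act := M.act_act
  act_deg := M.act_deg
  d := M.d
  d_deg := M.d_deg
  d_sq := M.d_sq
  leibniz := M.leibniz

lemma p_d (n : ℤ) (x : M.carrier) : M.p (n + 1) (M.d x) = M.d (M.p n x) := by
  induction x using internal_induction M.internal with
  | hom i x hx =>
    by_cases h : i = n
    · subst h; rw [M.p_of_mem hx, M.p_of_mem (M.d_deg hx)]
    · rw [M.p_ne hx h, M.p_ne (M.d_deg hx) (by omega), map_zero]
  | add x y hx hy => simp [hx, hy]
  | zero => simp

lemma mem_iSup_deg (x : M.carrier) : x ∈ ⨆ n, M.deg n := by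
  rw [M.internal.submodule_iSup_eq_top]; trivial
lemma mem_iSup_e (x : M.carrier) :
    x ∈ ⨆ i, Submodule.map (M.act.flip (A.e i)) (⊤ : Submodule K M.carrier) := by
  rw [M.unital.submodule_iSup_eq_top]; trivial

lemma act_e_of_mem {i : A.ι} {x : M.carrier}
    (hx : x ∈ Submodule.map (M.act.flip (A.e i)) (⊤ : Submodule K M.carrier)) :
    M.act x (A.e i) = x := by
  obtain ⟨y, -, rfl⟩ := hx
  simp [M.act_act, A.e_idem]

lemma d_act_e (x : M.carrier) (i : A.ι) : M.d (M.act x (A.e i)) = M.act (M.d x) (A.e i) := by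
  induction x using internal_induction M.internal with
  | hom n x hx => rw [M.leibniz hx]; simp [A.d_e]
  | add x y hx hy => simp [hx, hy]
  | zero => simp

end DGMod
end

section
variable {K : Type} [CommRing K] {A : DGAlgebra K}

/-! ### Shift -/
/-- the shift `M[n]` -/
@[reducible] def shiftMod (M : DGMod K A) (n : ℤ) : DGMod K A where
  carrier := M.carrier
  deg k := M.deg (k + n)
  internal := internal_of_proj (fun k => M.p (k + n)) (fun _ _ h => M.p_of_mem h)
    (fun _ _ _ h h' => M.p_ne h (by omega)) (fun x => by
      have h := M.mem_iSup_deg x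
      refine (iSup_le fun k => ?_ : (⨆ n, M.deg n) ≤ _) h
      refine le_trans ?_ (le_iSup _ (k - n))
      simp)
  act := M.act
  act_act := M.act_act
  act_deg := fun {i j x a} hx ha => by
    have := M.act_deg hx ha
    rwa [show i + n + j = i + j + n by ring] at this
  unital := M.unital
  d := sgn n • M.d
  d_deg := fun {i x} hx => by
    have := M.d_deg hx
    rw [show i + n + 1 = i + 1 + n by ring] at this
    exact zsmul_mem this _
  d_sq := fun x => by simp [M.d_sq]
  leibniz := fun {i x} hx a => by
    simp only [LinearMap.smul_apply, M.leibniz hx, smul_add, map_zsmul]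
    rw [smul_smul, sgn_add, mul_comm (sgn i), ← mul_assoc, sgn_mul_self, one_mul]

/-- shift of morphisms -/
@[reducible] def shiftMap {M N : DGMod K A} (f : CMap M N) (n : ℤ) :
    CMap (shiftMod M n) (shiftMod N n) where
  toFun := f.toFun
  mem := ⟨fun k x hx => by simpa using f.mem.1 _ _ hx, f.mem.2⟩
  comm x := by simp [f.comm]

/-! ### zero -/
/-- the zero module -/
@[reducible] def zeroMod (A : DGAlgebra K) : DGMod K A where
  carrier := PUnit
  deg _ := ⊥
  internal := internal_of_proj (fun _ => 0) (fun _ _ _ => rfl) (fun _ _ _ _ _ => rfl)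
    (fun x => by rw [show x = 0 from rfl]; exact zero_mem _)
  act := 0
  act_act _ _ _ := rfl
  act_deg _ _ := by simp
  unital := internal_of_proj (fun _ => 0) (fun _ _ _ => rfl) (fun _ _ _ _ _ => rfl)
    (fun x => by rw [show x = 0 from rfl]; exact zero_mem _)
  d := 0
  d_deg _ := by simp
  d_sq _ := rfl
  leibniz _ _ := rfl

/-! ### Cone -/
lemma CMap.deg {M N : DGMod K A} (f : CMap M N) {n : ℤ} {x : M.carrier} (hx : x ∈ M.deg n) :
    f.toFun x ∈ N.deg n := by simpa using f.mem.1 n x hx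

/-- the cone of a chain map: `N ⊕ M[1]` -/
@[reducible] def coneMod {M N : DGMod K A} (f : CMap M N) : DGMod K A where
  carrier := N.carrier × M.carrier
  deg n := (N.deg n).prod (M.deg (n + 1))
  internal := internal_of_proj (fun k => (N.p k).prodMap (M.p (k + 1)))
    (fun k x hx => Prod.ext (N.p_of_mem hx.1) (M.p_of_mem hx.2))
    (fun i j x hx hij => Prod.ext (N.p_ne hx.1 hij) (M.p_ne hx.2 (by omega)))
    (fun x => by
      have h1 : (x.1, (0 : M.carrier)) ∈ ⨆ n, (N.deg n).prod (M.deg (n + 1)) := by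
        have h : (⨆ n, N.deg n) ≤ Submodule.comap (LinearMap.inl K N.carrier M.carrier)
            (⨆ n, (N.deg n).prod (M.deg (n + 1))) := iSup_le fun n y hy =>
          Submodule.mem_iSup_of_mem n ⟨hy, zero_mem _⟩
        exact h (N.mem_iSup_deg x.1)
      have h2 : ((0 : N.carrier), x.2) ∈ ⨆ n, (N.deg n).prod (M.deg (n + 1)) := by
        have h : (⨆ n, M.deg n) ≤ Submodule.comap (LinearMap.inr K N.carrier M.carrier)
            (⨆ n, (N.deg n).prod (M.deg (n + 1))) := iSup_le fun n y hy =>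
          Submodule.mem_iSup_of_mem (n - 1) ⟨zero_mem _, by simpa using hy⟩
        exact h (M.mem_iSup_deg x.2)
      simpa using add_mem h1 h2)
  act := LinearMap.mk₂ K (fun x a => (N.act x.1 a, M.act x.2 a)) (by intros; simp) (by intros; simp)
    (by intros; simp) (by intros; simp)
  act_act x a b := by simp [M.act_act, N.act_act]
  act_deg := fun {i j x a} hx ha => ⟨N.act_deg hx.1 ha, by
    have := M.act_deg hx.2 ha
    rwa [show i + 1 + j = i + j + 1 by ring] at this⟩
  unital := internal_of_proj
    (fun i => (N.act.flip (A.e i)).prodMap (M.act.flip (A.e i)))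
    (by rintro i _ ⟨x, -, rfl⟩; simp [M.act_act, N.act_act, A.e_idem])
    (by rintro i j _ ⟨x, -, rfl⟩ hij; simp [M.act_act, N.act_act, A.e_orth hij])
    (fun x => by
      set D : A.ι → Submodule K (N.carrier × M.carrier) := fun i => Submodule.map (LinearMap.flip
        (LinearMap.mk₂ K (fun (x : N.carrier × M.carrier) (a : A.carrier) => (N.act x.1 a, M.act x.2 a)) (by intros; simp) (by intros; simp)
          (by intros; simp) (by intros; simp)) (A.e i)) ⊤ with hD
      have h1 : (x.1, (0 : M.carrier)) ∈ ⨆ n, D n := by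
        have h : (⨆ i, Submodule.map (N.act.flip (A.e i)) (⊤ : Submodule K N.carrier)) ≤
            Submodule.comap (LinearMap.inl K N.carrier M.carrier) (⨆ n, D n) := by
          refine iSup_le fun i y hy => Submodule.mem_iSup_of_mem i ?_
          exact ⟨(y, 0), trivial, by simp [N.act_e_of_mem hy]⟩
        exact h (N.mem_iSup_e x.1)
      have h2 : ((0 : N.carrier), x.2) ∈ ⨆ n, D n := by
        have h : (⨆ i, Submodule.map (M.act.flip (A.e i)) (⊤ : Submodule K M.carrier)) ≤
            Submodule.comap (LinearMap.inr K N.carrier M.carrier) (⨆ n, D n) := by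
          refine iSup_le fun i y hy => Submodule.mem_iSup_of_mem i ?_
          exact ⟨(0, y), trivial, by simp [M.act_e_of_mem hy]⟩
        exact h (M.mem_iSup_e x.2)
      simpa using add_mem h1 h2)
  d := (N.d ∘ₗ LinearMap.fst K _ _ + f.toFun ∘ₗ LinearMap.snd K _ _).prod
    (- (M.d ∘ₗ LinearMap.snd K _ _))
  d_deg := fun {i x} hx => ⟨add_mem (N.d_deg hx.1) (f.deg hx.2), neg_mem (M.d_deg hx.2)⟩
  d_sq x := by simp [M.d_sq, N.d_sq, f.comm]
  leibniz := fun {i x} hx a => by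
    ext
    · simp [N.leibniz hx.1, f.mem.2]; abel
    · simp [M.leibniz hx.2, sgn_add]; abel

/-! ### Coproducts -/
section coprod
variable {J : Type} (X : J → DGMod K A)
open Classical in
/-- the coproduct -/
@[reducible] def coprodMod : DGMod K A where
  carrier := Π₀ j, (X j).carrier
  deg n := { carrier := {x | ∀ j, x j ∈ (X j).deg n}
             add_mem' := fun hx hy j => add_mem (hx j) (hy j)
             zero_mem' := fun j => zero_mem _
             smul_mem' := fun c x hx j => Submodule.smul_mem _ c (hx j) }
  internal := internal_of_proj (fun k => DFinsupp.mapRange.linearMap fun j => (X j).p k)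
    (fun k x hx => by ext j; simp [(X j).p_of_mem (hx j)])
    (fun i j x hx hij => by ext j; simp [(X j).p_ne (hx j) hij])
    (fun x => by
      induction x using DFinsupp.induction with
      | h0 => exact zero_mem _
      | ha j y x _ _ hx =>
        refine add_mem ?_ hx
        refine (iSup_le fun n y hy => ?_ : (⨆ n, (X j).deg n) ≤
          Submodule.comap (DFinsupp.lsingle (R := K) (M := fun j => (X j).carrier) j) (⨆ n, _)) ((X j).mem_iSup_deg y)
        refine Submodule.mem_iSup_of_mem n fun k => ?_
        by_cases h : j = k
        · subst h; simpa using hy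
        · simp [DFinsupp.single_eq_of_ne (Ne.symm h)])
  act := LinearMap.mk₂ K (fun x a => DFinsupp.mapRange.linearMap (fun j => (X j).act.flip a) x)
    (by intros; ext; simp) (by intros; ext; simp) (by intros; ext; simp) (by intros; ext; simp)
  act_act x a b := by ext; simp [DGMod.act_act]
  act_deg hx ha j := by simpa using (X j).act_deg (hx j) ha
  unital := internal_of_proj
    (fun i => DFinsupp.mapRange.linearMap fun j => (X j).act.flip (A.e i))
    (by rintro i _ ⟨x, -, rfl⟩; ext; simp [DGMod.act_act, A.e_idem])
    (by rintro i j _ ⟨x, -, rfl⟩ hij; ext; simp [DGMod.act_act, A.e_orth hij])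
    (fun x => by
      induction x using DFinsupp.induction with
      | h0 => exact zero_mem _
      | ha j y x _ _ hx =>
        refine add_mem ?_ hx
        refine (iSup_le fun n y hy => ?_ : (⨆ i, Submodule.map ((X j).act.flip (A.e i)) (⊤ : Submodule K (X j).carrier)) ≤
          Submodule.comap (DFinsupp.lsingle (R := K) (M := fun j => (X j).carrier) j) (⨆ n, _)) ((X j).mem_iSup_e y)
        refine Submodule.mem_iSup_of_mem n ⟨DFinsupp.single j y, trivial, ?_⟩
        ext k
        by_cases h : j = k
        · subst h; simp [(X j).act_e_of_mem hy]
        · simp [DFinsupp.single_eq_of_ne (Ne.symm h)])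
  d := DFinsupp.mapRange.linearMap fun j => (X j).d
  d_deg hx j := by simpa using (X j).d_deg (hx j)
  d_sq x := by ext; simp [DGMod.d_sq]
  leibniz hx a := by ext j; simp [(X j).leibniz (hx j)]

open Classical in
/-- inclusion -/
def coprodIn (j : J) : CMap (X j) (coprodMod X) where
  toFun := DFinsupp.lsingle (R := K) (M := fun j => (X j).carrier) j
  mem := ⟨fun k x hx i => by
    by_cases h : j = i
    · subst h; simpa using hx
    · simp [DFinsupp.single_eq_of_ne (Ne.symm h)], fun x a => by
      ext i
      by_cases h : j = i
      · subst h; simp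
      · simp [DFinsupp.single_eq_of_ne (Ne.symm h)]⟩
  comm x := by
      ext i
      by_cases h : j = i
      · subst h; simp
      · simp [DFinsupp.single_eq_of_ne (Ne.symm h)]

variable {X}
open Classical in
lemma coprod_lift_mem {N : DGMod K A} {n : ℤ} (φ : ∀ j, (X j).carrier →ₗ[K] N.carrier)
    (h : ∀ j, φ j ∈ homDeg (X j) N n) :
    (DFinsupp.lsum (S := ℕ) φ : (coprodMod X).carrier →ₗ[K] N.carrier) ∈ homDeg (coprodMod X) N n := by
  refine ⟨fun k x hx => ?_, fun x a => ?_⟩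
  · simp only [DFinsupp.lsum_apply_apply]
    exact dfinsuppSumAddHom_mem _ _ _ (fun j _ => (h j).1 k _ (hx j))
  · induction x using DFinsupp.induction with
    | h0 => simp
    | ha j y x _ _ hx =>
      have : (coprodMod X).act (DFinsupp.single j y) a = DFinsupp.single j ((X j).act y a) := by
        ext i
        by_cases h : j = i
        · subst h; simp
        · simp [DFinsupp.single_eq_of_ne (Ne.symm h)]
      rw [map_add, LinearMap.add_apply, map_add, hx, this]
      simp [(h j).2]

open Classical in
lemma coprod_ext {W : Type} [AddCommGroup W] [Module K W]
    {f g : (coprodMod X).carrier →ₗ[K] W}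
    (h : ∀ j, f ∘ₗ (coprodIn X j).toFun = g ∘ₗ (coprodIn X j).toFun) : f = g := by
  refine DFinsupp.lhom_ext' (M := fun j => (X j).carrier) fun j => h j

open Classical in
lemma coprod_lift_in {W : Type} [AddCommGroup W] [Module K W]
    (φ : ∀ j, (X j).carrier →ₗ[K] W) (j : J) :
    (DFinsupp.lsum (S := ℕ) φ : (coprodMod X).carrier →ₗ[K] W) ∘ₗ (coprodIn X j).toFun = φ j := by
  ext x
  simp [coprodIn]

lemma CMap.comm' {M N : DGMod K A} (f : CMap M N) : f.toFun ∘ₗ M.d = N.d ∘ₗ f.toFun :=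
  LinearMap.ext f.comm

open Classical in
/-- descent -/
def coprodDesc {N : DGMod K A} (f : ∀ j, CMap (X j) N) : CMap (coprodMod X) N where
  toFun := DFinsupp.lsum (S := ℕ) fun j => (f j).toFun
  mem := coprod_lift_mem _ fun j => (f j).mem
  comm := LinearMap.congr_fun (f := (DFinsupp.lsum (S := ℕ) fun j => (f j).toFun) ∘ₗ (coprodMod X).d)
    (g := N.d ∘ₗ (DFinsupp.lsum (S := ℕ) fun j => (f j).toFun)) (by
    refine coprod_ext fun j => ?_
    rw [LinearMap.comp_assoc, ← (coprodIn X j).comm', ← LinearMap.comp_assoc, coprod_lift_in,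
      LinearMap.comp_assoc, coprod_lift_in, (f j).comm'])
end coprod

end

section
variable {K : Type} [CommRing K] {A : DGAlgebra K}

lemma exists_sum_of_mem_iSup {J V : Type} [AddCommGroup V] [Module K V] {D : J → Submodule K V}
    (pr : J → V →ₗ[K] V) (h1 : ∀ j x, x ∈ D j → pr j x = x)
    (h2 : ∀ i j x, x ∈ D i → i ≠ j → pr j x = 0) {x : V} (hx : x ∈ ⨆ j, D j) :
    ∃ F : Finset J, ∀ G, F ⊆ G → ∑ j ∈ G, pr j x = x := by
  classical
  refine Submodule.iSup_induction D (motive := fun x => ∃ F : Finset J, ∀ G, F ⊆ G → ∑ j ∈ G, pr j x = x)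
    hx ?_ ?_ ?_
  · intro i x hx
    refine ⟨{i}, fun G hG => ?_⟩
    rw [Finset.sum_eq_single_of_mem i (hG (by simp)), h1 i x hx]
    intro j _ hj
    exact h2 i j x hx hj.symm
  · exact ⟨∅, by simp⟩
  · rintro x y ⟨F, hF⟩ ⟨F', hF'⟩
    refine ⟨F ∪ F', fun G hG => ?_⟩
    simp only [map_add, Finset.sum_add_distrib]
    rw [hF G (Finset.union_subset_left hG), hF' G (Finset.union_subset_right hG)]

namespace PreDG
variable (V : PreDG A)

/-- part of `V` fixed by an idempotent -/
@[reducible] def epart (i : A.ι) : Submodule K V.carrier :=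
  Submodule.map (V.act.flip (A.e i)) (⊤ : Submodule K V.carrier)

lemma epart_fix (i : A.ι) (x : V.carrier) (hx : x ∈ V.epart i) : V.act.flip (A.e i) x = x := by
  obtain ⟨y, -, rfl⟩ := hx
  simp [V.act_act, A.e_idem]

lemma epart_ne (i j : A.ι) (x : V.carrier) (hx : x ∈ V.epart i) (hij : i ≠ j) :
    V.act.flip (A.e j) x = 0 := by
  obtain ⟨y, -, rfl⟩ := hx
  simp [V.act_act, A.e_orth hij]

lemma deg_sum {x : V.carrier} (hx : x ∈ ⨆ n, V.deg n) :
    ∃ F : Finset ℤ, ∀ G, F ⊆ G → ∑ n ∈ G, V.p n x = x :=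
  exists_sum_of_mem_iSup V.p (fun _ _ h => V.p_of_mem h) (fun _ _ _ h h' => V.p_ne h h') hx

lemma e_sum {x : V.carrier} (hx : x ∈ ⨆ i, V.epart i) :
    ∃ F : Finset A.ι, ∀ G, F ⊆ G → ∑ i ∈ G, V.act x (A.e i) = x :=
  exists_sum_of_mem_iSup (fun i => V.act.flip (A.e i)) V.epart_fix V.epart_ne hx

lemma mem_epart_of_sum {x : V.carrier} (F : Finset A.ι) (h : ∑ i ∈ F, V.act x (A.e i) = x) :
    x ∈ ⨆ i, V.epart i := by
  rw [← h]
  exact sum_mem fun i _ => Submodule.mem_iSup_of_mem i ⟨x, trivial, rfl⟩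

/-- the largest sub dg module which is honest -/
def coreSub : Submodule K V.carrier := (⨆ n, V.deg n) ⊓ (⨆ i, V.epart i)

lemma p_act_e {x : V.carrier} (hx : x ∈ ⨆ n, V.deg n) (n : ℤ) (i : A.ι) :
    V.p n (V.act x (A.e i)) = V.act (V.p n x) (A.e i) := by
  refine Submodule.iSup_induction V.deg (motive := fun x => V.p n (V.act x (A.e i)) = V.act (V.p n x) (A.e i)) hx ?_ ?_ ?_
  · intro m x hx
    have h1 : V.act x (A.e i) ∈ V.deg m := by simpa using V.act_deg hx (A.e_deg i)
    by_cases h : m = n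
    · subst h; rw [V.p_of_mem hx, V.p_of_mem h1]
    · rw [V.p_ne hx h, V.p_ne h1 h]; simp
  · simp
  · intro x y hx hy; simp [hx, hy]

lemma d_act_e {x : V.carrier} (hx : x ∈ ⨆ n, V.deg n) (i : A.ι) :
    V.d (V.act x (A.e i)) = V.act (V.d x) (A.e i) := by
  refine Submodule.iSup_induction V.deg (motive := fun x => V.d (V.act x (A.e i)) = V.act (V.d x) (A.e i)) hx ?_ ?_ ?_
  · intro m x hx
    rw [V.leibniz hx]; simp [A.d_e]
  · simp
  · intro x y hx hy; simp [hx, hy]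

lemma p_core {x : V.carrier} (hx : x ∈ V.coreSub) (n : ℤ) : V.p n x ∈ V.coreSub := by
  refine ⟨Submodule.mem_iSup_of_mem n (V.p_mem n x), ?_⟩
  obtain ⟨F, hF⟩ := V.e_sum hx.2
  refine V.mem_epart_of_sum F ?_
  conv_rhs => rw [← hF F subset_rfl, map_sum]
  exact Finset.sum_congr rfl fun i _ => (V.p_act_e hx.1 n i).symm

lemma act_core {x : V.carrier} (hx : x ∈ V.coreSub) (a : A.carrier) : V.act x a ∈ V.coreSub := by
  constructor
  · refine Submodule.iSup_induction V.deg (motive := fun x => V.act x a ∈ ⨆ n, V.deg n) hx.1 ?_ ?_ ?_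
    · intro n x hx
      induction a using internal_induction A.internal with
      | hom m a ha => exact Submodule.mem_iSup_of_mem _ (V.act_deg hx ha)
      | add a b ha hb => rw [map_add]; exact add_mem ha hb
      | zero => simp
    · simp
    · intro x y hx hy; rw [map_add]; exact add_mem hx hy
  · induction a using internal_induction A.enough_right with
    | hom i a ha =>
      obtain ⟨b, -, rfl⟩ := ha
      refine Submodule.mem_iSup_of_mem i ⟨V.act x b, trivial, ?_⟩
      simp [V.act_act]
    | add a b ha hb => rw [map_add]; exact add_mem ha hb
    | zero => simp

lemma d_core {x : V.carrier} (hx : x ∈ V.coreSub) : V.d x ∈ V.coreSub := by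
  constructor
  · refine Submodule.iSup_induction V.deg (motive := fun x => V.d x ∈ ⨆ n, V.deg n) hx.1 ?_ ?_ ?_
    · intro n x hx
      exact Submodule.mem_iSup_of_mem _ (V.d_deg hx)
    · simp
    · intro x y hx hy; rw [map_add]; exact add_mem hx hy
  · obtain ⟨F, hF⟩ := V.e_sum hx.2
    refine V.mem_epart_of_sum F ?_
    conv_rhs => rw [← hF F subset_rfl, map_sum]
    exact Finset.sum_congr rfl fun i _ => (V.d_act_e hx.1 i).symm

/-- the core as pre dg module -/
@[reducible] def corePre : PreDG A where
  carrier := V.coreSub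
  deg n := (V.deg n).comap V.coreSub.subtype
  p n := (V.p n).restrict fun _ h => V.p_core h n
  p_mem n x := V.p_mem n _
  p_of_mem h := Subtype.ext (V.p_of_mem h)
  p_ne h h' := Subtype.ext (V.p_ne h h')
  act := LinearMap.mk₂ K (fun x a => ⟨V.act x a, V.act_core x.2 a⟩)
    (by intros; ext; simp) (by intros; ext; simp) (by intros; ext; simp) (by intros; ext; simp)
  act_act x a b := Subtype.ext (V.act_act _ _ _)
  act_deg h h' := V.act_deg (i := _) (j := _) h h'
  d := V.d.restrict fun _ h => V.d_core h
  d_deg h := V.d_deg h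
  d_sq x := Subtype.ext (V.d_sq _)
  leibniz h a := Subtype.ext (by simpa using V.leibniz h a)

/-- the core as dg module -/
@[reducible] def core : DGMod K A := V.corePre.toDGMod
  (fun x => by
    obtain ⟨F, hF⟩ := V.deg_sum x.2.1
    have : x = ∑ n ∈ F, V.corePre.p n x := Subtype.ext (by simpa using (hF F subset_rfl).symm)
    rw [this]
    exact sum_mem fun n _ => Submodule.mem_iSup_of_mem n (V.corePre.p_mem n x))
  (fun x => by
    obtain ⟨F, hF⟩ := V.e_sum x.2.2
    refine V.corePre.mem_epart_of_sum F ?_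
    exact Subtype.ext (by simpa using (hF F subset_rfl)))

variable {V}
lemma map_mem_core {N : DGMod K A} {n : ℤ} {f : N.carrier →ₗ[K] V.carrier}
    (h1 : ∀ k x, x ∈ N.deg k → f x ∈ V.deg (k + n)) (h2 : ∀ x a, f (N.act x a) = V.act (f x) a)
    (x : N.carrier) : f x ∈ V.coreSub := by
  constructor
  · exact (iSup_le fun k y hy => Submodule.mem_iSup_of_mem _ (h1 k y hy) :
      (⨆ k, N.deg k) ≤ Submodule.comap f (⨆ n, V.deg n)) (N.mem_iSup_deg x)
  · refine (iSup_le fun i y hy => Submodule.mem_iSup_of_mem i ?_ :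
      (⨆ i, Submodule.map (N.act.flip (A.e i)) (⊤ : Submodule K N.carrier)) ≤ Submodule.comap f (⨆ i, V.epart i)) (N.mem_iSup_e x)
    exact ⟨f y, trivial, by rw [LinearMap.flip_apply, ← h2, N.act_e_of_mem hy]⟩

lemma codRestrict_mem {N : DGMod K A} {n : ℤ} {f : N.carrier →ₗ[K] V.carrier}
    (h1 : ∀ k x, x ∈ N.deg k → f x ∈ V.deg (k + n)) (h2 : ∀ x a, f (N.act x a) = V.act (f x) a) :
    (f.codRestrict V.coreSub (map_mem_core h1 h2) : N.carrier →ₗ[K] V.core.carrier)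
      ∈ homDeg N V.core n :=
  ⟨fun k x hx => h1 k x hx, fun x a => Subtype.ext (h2 x a)⟩

end PreDG

/-! ### Products -/
section prod
variable {J : Type} (X : J → DGMod K A)

/-- naive product -/
@[reducible] def prodPre : PreDG A where
  carrier := ∀ j, (X j).carrier
  deg n := Submodule.pi Set.univ fun j => (X j).deg n
  p n := LinearMap.pi fun j => (X j).p n ∘ₗ LinearMap.proj j
  p_mem n x j _ := (X j).p_mem n _
  p_of_mem h := funext fun j => (X j).p_of_mem (h j trivial)
  p_ne h h' := funext fun j => (X j).p_ne (h j trivial) h'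
  act := LinearMap.mk₂ K (fun x a => fun j => (X j).act (x j) a)
    (by intros; ext; simp) (by intros; ext; simp) (by intros; ext; simp) (by intros; ext; simp)
  act_act x a b := by ext; simp [DGMod.act_act]
  act_deg hx ha j _ := by simpa using (X j).act_deg (hx j trivial) ha
  d := LinearMap.pi fun j => (X j).d ∘ₗ LinearMap.proj j
  d_deg hx j _ := by simpa using (X j).d_deg (hx j trivial)
  d_sq x := by ext; simp [DGMod.d_sq]
  leibniz hx a := by ext j; simp [(X j).leibniz (hx j trivial)]

/-- product of dg modules -/
@[reducible] def prodMod : DGMod K A := (prodPre X).core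

/-- projection -/
def prodPr (j : J) : CMap (prodMod X) (X j) where
  toFun := LinearMap.proj j ∘ₗ (prodPre X).coreSub.subtype
  mem := ⟨fun k x hx => by simpa using hx j trivial, fun x a => rfl⟩
  comm x := rfl

variable {X}
lemma prod_lift_deg {N : DGMod K A} {n : ℤ} (φ : ∀ j, N.carrier →ₗ[K] (X j).carrier)
    (h : ∀ j, φ j ∈ homDeg N (X j) n) :
    ∀ k x, x ∈ N.deg k → LinearMap.pi φ x ∈ (prodPre X).deg (k + n) :=
  fun k x hx j _ => (h j).1 k x hx
lemma prod_lift_act {N : DGMod K A} {n : ℤ} (φ : ∀ j, N.carrier →ₗ[K] (X j).carrier)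
    (h : ∀ j, φ j ∈ homDeg N (X j) n) :
    ∀ x a, LinearMap.pi φ (N.act x a) = (prodPre X).act (LinearMap.pi φ x) a :=
  fun x a => funext fun j => (h j).2 x a

/-- lift to the product -/
def prodLiftFun {N : DGMod K A} {n : ℤ} (φ : ∀ j, N.carrier →ₗ[K] (X j).carrier)
    (h : ∀ j, φ j ∈ homDeg N (X j) n) : N.carrier →ₗ[K] (prodMod X).carrier :=
  (LinearMap.pi φ).codRestrict _ (PreDG.map_mem_core (prod_lift_deg φ h) (prod_lift_act φ h))

lemma prodLiftFun_mem {N : DGMod K A} {n : ℤ} (φ : ∀ j, N.carrier →ₗ[K] (X j).carrier)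
    (h : ∀ j, φ j ∈ homDeg N (X j) n) : prodLiftFun φ h ∈ homDeg N (prodMod X) n :=
  PreDG.codRestrict_mem (prod_lift_deg φ h) (prod_lift_act φ h)

lemma prod_ext {x y : (prodMod X).carrier} (h : ∀ j, (prodPr X j).toFun x = (prodPr X j).toFun y) :
    x = y := Subtype.ext (funext h)

@[simp] lemma prodPr_lift {N : DGMod K A} {n : ℤ} (φ : ∀ j, N.carrier →ₗ[K] (X j).carrier)
    (h : ∀ j, φ j ∈ homDeg N (X j) n) (j : J) (x : N.carrier) :
    (prodPr X j).toFun (prodLiftFun φ h x) = φ j x := rfl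

/-- lift of chain maps -/
def prodLift {N : DGMod K A} (f : ∀ j, CMap N (X j)) : CMap N (prodMod X) where
  toFun := prodLiftFun (fun j => (f j).toFun) (fun j => (f j).mem)
  mem := prodLiftFun_mem _ _
  comm x := prod_ext fun j => by rw [(prodPr X j).comm, prodPr_lift, prodPr_lift, (f j).comm]
end prod

/-! ### the regular module -/
/-- projections of A -/
def DGAlgebra.p (A : DGAlgebra K) (n : ℤ) : A.carrier →ₗ[K] A.carrier := gproj A.internal n

/-- the regular module -/
@[reducible] def regMod (A : DGAlgebra K) : DGMod K A where
  carrier := A.carrier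
  deg := A.deg
  internal := A.internal
  act := LinearMap.mul K A.carrier
  act_act x a b := by simp [mul_assoc]
  act_deg h h' := A.mul_mem h h'
  unital := A.enough_right
  d := A.d
  d_deg := A.d_deg
  d_sq := A.d_sq
  leibniz := A.leibniz

/-! ### coinduced modules -/
/-- sign operator -/
def DGAlgebra.eps (A : DGAlgebra K) : A.carrier →ₗ[K] A.carrier :=
  glift A.internal fun n => sgn n • LinearMap.id
lemma DGAlgebra.eps_of_mem {n : ℤ} {a : A.carrier} (h : a ∈ A.deg n) : A.eps a = sgn n • a := by
  simp [DGAlgebra.eps, glift_of_mem _ _ h]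

section coind
variable (A) (E : Type) [AddCommGroup E] [Module K E]

lemma coind_zero {i : ℤ} {ψ : A.carrier →ₗ[K] E} (hψ : ∀ m, m ≠ -i → ∀ b ∈ A.deg m, ψ b = 0)
    {m : ℤ} {b : A.carrier} (hb : b ∈ A.deg m) (h : m ≠ -i) : ψ b = 0 := hψ m h b hb

/-- all linear maps `A → E` -/
@[reducible] def coindPre : PreDG A where
  carrier := A.carrier →ₗ[K] E
  deg n := { carrier := {ψ | ∀ m, m ≠ -n → ∀ b ∈ A.deg m, ψ b = 0}
             add_mem' := fun h h' m hm b hb => by simp [h m hm b hb, h' m hm b hb]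
             zero_mem' := fun m hm b hb => rfl
             smul_mem' := fun c ψ h m hm b hb => by simp [h m hm b hb] }
  p n := LinearMap.lcomp K E (A.p (-n))
  p_mem n ψ m hm b hb := by simp [DGAlgebra.p, gproj_ne A.internal hb hm]
  p_of_mem := fun {n ψ} h => internal_ext A.internal fun m b hb => by
    by_cases hm : m = -n
    · subst hm; simp [DGAlgebra.p, gproj_of_mem A.internal hb]
    · simp [DGAlgebra.p, gproj_ne A.internal hb hm, h m hm b hb]
  p_ne := fun {m n ψ} h hmn => internal_ext A.internal fun k b hb => by
    by_cases hm : k = -n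
    · subst hm; simp [DGAlgebra.p, gproj_of_mem A.internal hb, h _ (by omega) b hb]
    · simp [DGAlgebra.p, gproj_ne A.internal hb hm]
  act := LinearMap.mk₂ K (fun ψ a => ψ ∘ₗ LinearMap.mulLeft K a)
    (by intros; ext; simp) (by intros; ext; simp) (by intros; ext; simp [add_mul])
    (by intros; ext; simp [smul_mul_assoc])
  act_act x a b := by ext; simp
  act_deg := fun {i j ψ a} h ha m hm b hb => by
    simpa using h (j + m) (by omega) _ (A.mul_mem ha hb)
  d := LinearMap.lcomp K E (A.d ∘ₗ A.eps)
  d_deg := fun {i ψ} h m hm b hb => by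
    simp [A.eps_of_mem hb, h (m + 1) (by omega) _ (A.d_deg hb)]
  d_sq ψ := internal_ext A.internal fun m b hb => by
    simp [A.eps_of_mem hb, A.eps_of_mem (A.d_deg hb), A.d_sq]
  leibniz := fun {i ψ} h a => internal_ext A.internal fun m b hb => by
    induction a using internal_induction A.internal with
    | hom n a ha =>
      by_cases hn : n + 1 + m = -i
      · have hi : i = -(n + m) - 1 := by omega
        subst hi
        simp [A.eps_of_mem hb, A.eps_of_mem (A.mul_mem ha hb), A.leibniz ha, sgn_add, smul_smul, sub_eq_add_neg, sgn_neg]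
        rw [mul_comm (sgn n) (sgn m), mul_assoc, sgn_mul_self]; simp
      · have hz := h _ hn _ (A.mul_mem (A.d_deg ha) hb)
        simp [A.eps_of_mem hb, A.eps_of_mem (A.mul_mem ha hb), A.leibniz ha, sgn_add, smul_smul, hz]
        rw [mul_comm (sgn n) (sgn m), mul_assoc, sgn_mul_self]; simp
    | add a a' ha ha' =>
      simp only [map_add, LinearMap.add_apply, smul_add] at ha ha' ⊢
      rw [ha, ha']; abel
    | zero => simp

/-- coinduced module -/
@[reducible] def coindMod : DGMod K A := (coindPre A E).core
end coind
end

section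
variable {K : Type} [CommRing K] {A : DGAlgebra K}

lemma DGAlgebra.d_e_mul (a : A.carrier) (i : A.ι) : A.d (A.e i * a) = A.e i * A.d a := by
  rw [A.leibniz (A.e_deg i), A.d_e]; simp

lemma DGAlgebra.left_sum (a : A.carrier) : ∃ F : Finset A.ι, ∑ i ∈ F, A.e i * a = a := by
  have h : a ∈ ⨆ i, Submodule.map (LinearMap.mulLeft K (A.e i)) (⊤ : Submodule K A.carrier) := by
    rw [A.enough_left.submodule_iSup_eq_top]; trivial
  obtain ⟨F, hF⟩ := exists_sum_of_mem_iSup (fun i => LinearMap.mulLeft K (A.e i))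
    (by rintro i _ ⟨x, -, rfl⟩; simp [← mul_assoc, A.e_idem])
    (by rintro i j _ ⟨x, -, rfl⟩ hij; simp [← mul_assoc, A.e_orth (Ne.symm hij)]) h
  exact ⟨F, hF F subset_rfl⟩

lemma DGMod.e_sum (M : DGMod K A) (x : M.carrier) :
    ∃ F : Finset A.ι, ∑ i ∈ F, M.act x (A.e i) = x := by
  obtain ⟨F, hF⟩ := M.toPre.e_sum (M.mem_iSup_e x)
  exact ⟨F, hF F subset_rfl⟩

theorem regMod_proj : IsHtpyProj (regMod A) := by
  intro N hN f
  have h : ∀ i : A.ι, ∃ w ∈ N.deg (-1), N.d w = f.toFun (A.e i) := by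
    intro i
    have h1 : f.toFun (A.e i) ∈ N.deg 0 := f.deg (M := regMod A) (A.e_deg i)
    have h2 : N.d (f.toFun (A.e i)) = 0 := by
      rw [← f.comm]; simp [A.d_e]
    obtain ⟨y, hy, hy'⟩ := hN 0 _ h1 h2
    refine ⟨N.act y (A.e i), by simpa using N.act_deg hy (A.e_deg i), ?_⟩
    rw [N.d_act_e, hy', ← f.mem.2]
    simp [A.e_idem]
  choose w hw hw' using h
  let σ : A.carrier →ₗ[K] N.carrier := glift A.enough_left fun i => N.act (w i)
  have hσ : ∀ i a, σ (A.e i * a) = N.act (w i) (A.e i * a) := fun i a =>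
    glift_of_mem A.enough_left (fun i => N.act (w i)) ⟨a, trivial, rfl⟩
  refine ⟨σ, ⟨fun k a ha => ?_, fun a b => ?_⟩, ?_⟩
  · obtain ⟨F, hF⟩ := A.left_sum a
    rw [← hF, map_sum]
    refine sum_mem fun i _ => ?_
    rw [hσ, add_comm]
    exact N.act_deg (hw i) (by simpa using A.mul_mem (A.e_deg i) ha)
  · obtain ⟨F, hF⟩ := A.left_sum a
    rw [← hF]
    simp only [map_sum, LinearMap.sum_apply]
    refine Finset.sum_congr rfl fun i _ => ?_
    rw [hσ, N.act_act, LinearMap.mul_apply', mul_assoc, hσ]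
  · refine internal_ext A.enough_left ?_
    rintro i _ ⟨a, -, rfl⟩
    simp only [LinearMap.mulLeft_apply, LinearMap.add_apply, LinearMap.comp_apply]
    rw [A.d_e_mul, hσ, hσ, N.leibniz (hw i), hw', ← f.mem.2, A.d_e_mul]
    simp [← mul_assoc, A.e_idem]

/-- transposing a shift -/
def unshiftMap {P N : DGMod K A} {n : ℤ} (f : CMap (shiftMod P n) N) : CMap P (shiftMod N (-n)) where
  toFun := f.toFun
  mem := ⟨fun k x hx => by
    have := f.deg (n := k - n) (x := x) (by simpa using hx)
    simpa [sub_eq_add_neg] using this, f.mem.2⟩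
  comm x := by
    have := f.comm x
    simp only [LinearMap.smul_apply, map_zsmul] at this
    simp [sgn_neg, ← this]

lemma shift_proj {P : DGMod K A} (h : IsHtpyProj P) (n : ℤ) : IsHtpyProj (shiftMod P n) := by
  intro N hN f
  have hN' : IsAcyclic (shiftMod N (-n)) := by
    intro k x hx hdx
    obtain ⟨y, hy, hy'⟩ := hN _ x hx (by
      simpa [sgn_neg] using congrArg (fun z => sgn n • z) hdx)
    refine ⟨sgn n • y, zsmul_mem ?_ _, ?_⟩
    · change y ∈ N.deg (k - 1 + -n)
      rwa [show k - 1 + -n = k + -n - 1 by ring]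
    · simp [sgn_neg, hy']
  obtain ⟨σ, hσ, h⟩ := h _ hN' (unshiftMap f)
  refine ⟨sgn n • σ, ⟨fun k x hx => ?_, fun x a => ?_⟩, ?_⟩
  · have : σ x ∈ N.deg (k + n + -1 + -n) := hσ.1 _ _ hx
    refine zsmul_mem ?_ _
    rwa [show k + n + -1 + -n = k + -1 by ring] at this
  · simp [hσ.2]
  · ext x
    have := LinearMap.congr_fun h x
    simp only [unshiftMap] at this
    simp [this, sgn_neg]

/-- transposing a shift -/
def unshiftMap' {P N : DGMod K A} {n : ℤ} (f : CMap N (shiftMod P n)) : CMap (shiftMod N (-n)) P where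
  toFun := f.toFun
  mem := ⟨fun k x hx => by
    have := f.deg (n := k - n) (x := x) (by simpa [sub_eq_add_neg] using hx)
    simpa using this, f.mem.2⟩
  comm x := by
    have := f.comm x
    simp only [LinearMap.smul_apply] at this
    simp [sgn_neg, this]

lemma shift_inj {P : DGMod K A} (h : IsHtpyInj P) (n : ℤ) : IsHtpyInj (shiftMod P n) := by
  intro N hN f
  have hN' : IsAcyclic (shiftMod N (-n)) := by
    intro k x hx hdx
    obtain ⟨y, hy, hy'⟩ := hN _ x hx (by
      simpa [sgn_neg] using congrArg (fun z => sgn n • z) hdx)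
    refine ⟨sgn n • y, zsmul_mem ?_ _, ?_⟩
    · change y ∈ N.deg (k - 1 + -n)
      rwa [show k - 1 + -n = k + -n - 1 by ring]
    · simp [sgn_neg, hy']
  obtain ⟨σ, hσ, h⟩ := h _ hN' (unshiftMap' f)
  refine ⟨sgn n • σ, ⟨fun k x hx => ?_, fun x a => ?_⟩, ?_⟩
  · have := hσ.1 (k + n) x (by simpa using hx)
    refine zsmul_mem ?_ _
    rwa [show k + n + -1 = k + -1 + n by ring] at this
  · simp [hσ.2]
  · ext x
    have := LinearMap.congr_fun h x
    simp only [unshiftMap'] at this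
    simp [this, sgn_neg]

lemma coprod_nullHomotopic {J : Type} {X : J → DGMod K A} {N : DGMod K A}
    (f : CMap (coprodMod X) N) (h : ∀ j, ∃ σ, σ ∈ homDeg (X j) N (-1) ∧
      f.toFun ∘ₗ (coprodIn X j).toFun = N.d ∘ₗ σ + σ ∘ₗ (X j).d) : IsNullHomotopic f := by
  classical
  choose σ hσ h using h
  refine ⟨DFinsupp.lsum (S := ℕ) σ, coprod_lift_mem _ hσ, coprod_ext fun j => ?_⟩
  rw [h, LinearMap.add_comp, LinearMap.comp_assoc, LinearMap.comp_assoc, ← (coprodIn X j).comm',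
    coprod_lift_in, ← LinearMap.comp_assoc, coprod_lift_in]

lemma coprod_proj {J : Type} {X : J → DGMod K A} (h : ∀ j, IsHtpyProj (X j)) :
    IsHtpyProj (coprodMod X) := fun N hN f =>
  coprod_nullHomotopic f fun j => h j N hN (CategoryStruct.comp (obj := DGModCat K A) (coprodIn X j) f)

lemma prod_nullHomotopic {J : Type} {X : J → DGMod K A} {N : DGMod K A}
    (f : CMap N (prodMod X)) (h : ∀ j, ∃ σ, σ ∈ homDeg N (X j) (-1) ∧
      (prodPr X j).toFun ∘ₗ f.toFun = (X j).d ∘ₗ σ + σ ∘ₗ N.d) : IsNullHomotopic f := by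
  choose σ hσ h using h
  refine ⟨prodLiftFun σ hσ, prodLiftFun_mem _ _, LinearMap.ext fun x => prod_ext fun j => ?_⟩
  have := LinearMap.congr_fun (h j) x
  simp only [LinearMap.add_apply, LinearMap.comp_apply, map_add] at this ⊢
  rw [this, prodPr_lift, (prodPr X j).comm, prodPr_lift]

lemma prod_inj {J : Type} {X : J → DGMod K A} (h : ∀ j, IsHtpyInj (X j)) :
    IsHtpyInj (prodMod X) := fun N hN f =>
  prod_nullHomotopic f fun j => h j N hN (CategoryStruct.comp (obj := DGModCat K A) f (prodPr X j))

lemma acyclic_ker {N : DGMod K A} (hN : IsAcyclic N) {x : N.carrier} (hx : N.d x = 0) :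
    ∃ y, N.d y = x := by
  obtain ⟨F, hF⟩ := N.toPre.deg_sum (N.mem_iSup_deg x)
  have h : ∀ n, ∃ y, N.d y = N.p n x := fun n => by
    obtain ⟨y, -, hy⟩ := hN n _ (N.p_mem n x) (by rw [← N.p_d, hx, map_zero])
    exact ⟨y, hy⟩
  choose y hy using h
  refine ⟨∑ n ∈ F, y n, ?_⟩
  rw [map_sum, ← hF F subset_rfl]
  exact Finset.sum_congr rfl fun n _ => hy n

section coind
variable {E : Type} [AddCommGroup E] [Module K E]

theorem coind_inj (hE : Module.Injective K E) : IsHtpyInj (coindMod A E) := by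
  intro N hN f
  -- f as a map to linear maps
  let g : N.carrier →ₗ[K] (A.carrier →ₗ[K] E) := (coindPre A E).coreSub.subtype ∘ₗ f.toFun
  have g_act : ∀ x a b, g (N.act x a) b = g x (a * b) := fun x a b => by
    have := congrArg (fun z : (coindMod A E).carrier => z.1 b) (f.mem.2 x a)
    exact this
  have g_d : ∀ x {m : ℤ} {b}, b ∈ A.deg m → g (N.d x) b = sgn m • g x (A.d b) := fun x m b hb => by
    have := congrArg (fun z : (coindMod A E).carrier => z.1 b) (f.comm x)
    refine this.trans ?_
    change g x (A.d (A.eps b)) = _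
    rw [A.eps_of_mem hb]; simp
  have g_deg : ∀ {k m : ℤ} {x b}, x ∈ N.deg k → b ∈ A.deg m → m ≠ -k → g x b = 0 :=
    fun {k m x b} hx hb hm => f.deg hx m hm b hb
  let φ : N.carrier →ₗ[K] E := glift N.unital fun i => g.flip (A.e i)
  have hφ : ∀ x i, φ (N.act x (A.e i)) = g x (A.e i) := fun x i => by
    have := glift_of_mem N.unital (fun i => g.flip (A.e i)) (j := i) (x := N.act x (A.e i))
      ⟨x, trivial, rfl⟩
    refine this.trans ?_
    simp [g_act, A.e_idem]
  have φ_act : ∀ x a, φ (N.act x a) = g x a := fun x a => by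
    induction a using internal_induction A.enough_right with
    | hom i a ha =>
      obtain ⟨b, -, rfl⟩ := ha
      rw [LinearMap.mulRight_apply, ← N.act_act, hφ, g_act]
    | add a b ha hb => simp [ha, hb]
    | zero => simp
  have φ_d : ∀ x, φ (N.d x) = 0 := fun x => by
    obtain ⟨F, hF⟩ := N.e_sum x
    rw [← hF, map_sum, map_sum]
    refine Finset.sum_eq_zero fun i _ => ?_
    rw [N.d_act_e, hφ, g_d x (A.e_deg i), A.d_e]; simp
  have φ_deg : ∀ n, n ≠ 0 → ∀ x ∈ N.deg n, φ x = 0 := fun n hn x hx => by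
    obtain ⟨F, hF⟩ := N.e_sum x
    rw [← hF, map_sum]
    refine Finset.sum_eq_zero fun i _ => ?_
    rw [hφ, g_deg hx (A.e_deg i) (by omega)]
  obtain ⟨θ, hθ⟩ := hE.out ((LinearMap.ker N.d).liftQ N.d le_rfl)
    (LinearMap.ker_eq_bot.1 (Submodule.ker_liftQ_eq_bot _ _ _ le_rfl))
    ((LinearMap.ker N.d).liftQ φ (fun x hx => by
      obtain ⟨y, rfl⟩ := acyclic_ker hN hx
      exact φ_d y))
  have hθ' : ∀ x, θ (N.d x) = φ x := fun x => hθ (Submodule.Quotient.mk x)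
  let θ' := θ ∘ₗ N.p 1
  have hθ'' : ∀ x, θ' (N.d x) = φ x := fun x => by
    induction x using internal_induction N.internal with
    | hom n x hx =>
      change θ (N.p (0 + 1) (N.d x)) = _
      rw [N.p_d, hθ']
      by_cases h : n = 0
      · subst h; rw [N.p_of_mem hx]
      · rw [N.p_ne hx h, φ_deg n h x hx, map_zero]
    | add x y hx hy => simp [hx, hy]
    | zero => simp
  have θ_deg : ∀ n, n ≠ 1 → ∀ x ∈ N.deg n, θ' x = 0 := fun n hn x hx => by
    simp [θ', N.p_ne hx hn]
  let τ : N.carrier →ₗ[K] (A.carrier →ₗ[K] E) := N.act.compr₂ θ'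
  have hτ : ∀ x a, τ x a = θ' (N.act x a) := fun x a => rfl
  have h1 : ∀ k x, x ∈ N.deg k → τ x ∈ (coindPre A E).deg (k + -1) := fun k x hx m hm b hb => by
    rw [hτ]; exact θ_deg (k + m) (by omega) _ (N.act_deg hx hb)
  have h2 : ∀ x a, τ (N.act x a) = (coindPre A E).act (τ x) a := fun x a => by
    ext b; simp [hτ, N.act_act]
  refine ⟨τ.codRestrict _ (PreDG.map_mem_core h1 h2), PreDG.codRestrict_mem h1 h2, ?_⟩
  refine internal_ext N.internal fun k x hx => Subtype.ext (internal_ext A.internal fun m b hb => ?_)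
  change g x b = τ x (A.d (A.eps b)) + τ (N.d x) b
  rw [A.eps_of_mem hb, ← φ_act, ← hθ'', N.leibniz hx, hτ, hτ, map_add, add_comm]
  simp only [map_zsmul]
  by_cases h : m = -k
  · subst h; simp [sgn_neg]
  · rw [θ_deg (k + (m + 1)) (by omega) _ (N.act_deg hx (A.d_deg hb))]; simp
end coind

/-- ghosts: zero on homology -/
def IsGhost {M N : DGMod K A} (f : CMap M N) : Prop :=
  ∀ (n : ℤ) (x : M.carrier), x ∈ M.deg n → M.d x = 0 → ∃ z, f.toFun x = N.d z

/-- inclusion into the cone -/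
@[reducible] def coneIn {M N : DGMod K A} (f : CMap M N) : CMap N (coneMod f) where
  toFun := LinearMap.inl K _ _
  mem := ⟨fun k x hx => ⟨by simpa using hx, zero_mem _⟩, fun x a => by simp⟩
  comm x := by simp

/-- projection from the cone -/
@[reducible] def coneOut {M N : DGMod K A} (f : CMap M N) : CMap (coneMod f) (shiftMod M 1) where
  toFun := LinearMap.snd K _ _
  mem := ⟨fun k x hx => by simpa using hx.2, fun x a => by simp⟩
  comm x := by simp

/-- the map from a free module attached to a cycle -/
def cycMap {M : DGMod K A} {n : ℤ} {z : M.carrier} (hz : z ∈ M.deg n) (hdz : M.d z = 0) :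
    CMap (shiftMod (regMod A) (-n)) M where
  toFun := M.act z
  mem := ⟨fun k a ha => by
    have := M.act_deg hz ha
    rwa [show n + (k + -n) = k + 0 by ring] at this, fun a b => by simp [M.act_act]⟩
  comm a := by simp [M.leibniz hz, hdz, sgn_neg]

theorem left_ghost_step (M : DGMod K A) : ∃ (P : DGMod K A) (f : CMap P M), IsHtpyProj P ∧
    IsGhost (coneIn f) := by
  let J := {q : ℤ × M.carrier // q.2 ∈ M.deg q.1 ∧ M.d q.2 = 0}
  let X : J → DGMod K A := fun q => shiftMod (regMod A) (-q.1.1)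
  let g : ∀ j, CMap (X j) M := fun q => cycMap q.2.1 q.2.2
  refine ⟨coprodMod X, coprodDesc g, coprod_proj fun j => shift_proj regMod_proj _, ?_⟩
  intro n z hz hdz
  obtain ⟨F, hF⟩ := M.e_sum z
  let q : J := ⟨(n, z), hz, hdz⟩
  let E : (X q).carrier := ∑ i ∈ F, A.e i
  refine ⟨(0, (coprodIn X q).toFun E), ?_⟩
  have h1 : (coprodDesc g).toFun ((coprodIn X q).toFun E) = z := by
    have := LinearMap.congr_fun (coprod_lift_in (fun j => (g j).toFun) q) E
    refine this.trans ?_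
    simp only [g, cycMap, E, map_sum]
    exact hF
  have h2 : (coprodMod X).d ((coprodIn X q).toFun E) = 0 := by
    rw [← (coprodIn X q).comm]
    have : (X q).d E = 0 := by
      simp only [E, map_sum]
      refine Finset.sum_eq_zero fun i _ => ?_
      simp [X, A.d_e]
    rw [this, map_zero]
  refine Prod.ext ?_ ?_
  · change z = M.d 0 + (coprodDesc g).toFun ((coprodIn X q).toFun E)
    rw [h1, map_zero, zero_add]
  · change 0 = - (coprodMod X).d ((coprodIn X q).toFun E)
    rw [h2, neg_zero]

lemma exists_injective_embedding (X : Type) [AddCommGroup X] [Module K X] :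
    ∃ (E : Type) (_ : AddCommGroup E) (_ : Module K E) (φ : X →ₗ[K] E),
      Module.Injective K E ∧ Function.Injective φ := by
  let Y := Injective.under (ModuleCat.of K X)
  refine ⟨Y, inferInstance, inferInstance, (Injective.ι (ModuleCat.of K X)).hom, ?_, ?_⟩
  · have : Injective (ModuleCat.of K Y) := inferInstanceAs (Injective Y)
    exact Module.injective_module_of_injective_object K Y
  · exact (ModuleCat.mono_iff_injective _).1 inferInstance

/-- map to coinduced -/
def coindMap {M : DGMod K A} {E : Type} [AddCommGroup E] [Module K E] (φ : M.carrier →ₗ[K] E)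
    (hφ : ∀ x, φ (M.d x) = 0) (n : ℤ) : CMap M (shiftMod (coindMod A E) (-n)) :=
  have h1 : ∀ k x, x ∈ M.deg k → (M.act.compr₂ (φ ∘ₗ M.p n)) x ∈ (coindPre A E).deg (k + -n) := by
    intro k x hx m hm b hb
    simp [M.p_ne (M.act_deg hx hb) (n := n) (by omega)]
  have h2 : ∀ x a, (M.act.compr₂ (φ ∘ₗ M.p n)) (M.act x a) =
      (coindPre A E).act ((M.act.compr₂ (φ ∘ₗ M.p n)) x) a := by
    intro x a; ext b; simp [M.act_act]
  { toFun := (M.act.compr₂ (φ ∘ₗ M.p n)).codRestrict _ (PreDG.map_mem_core h1 h2)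
    mem := ⟨fun k x hx => h1 (k + 0) x (by simpa using hx), fun x a => Subtype.ext (h2 x a)⟩
    comm := by
      refine fun x => LinearMap.congr_fun (f := ((M.act.compr₂ (φ ∘ₗ M.p n)).codRestrict _ (PreDG.map_mem_core h1 h2)) ∘ₗ M.d)
        (g := (shiftMod (coindMod A E) (-n)).d ∘ₗ ((M.act.compr₂ (φ ∘ₗ M.p n)).codRestrict _ (PreDG.map_mem_core h1 h2)))
        (internal_ext M.internal fun k x hx => Subtype.ext (internal_ext A.internal fun m b hb => ?_)) x
      change φ (M.p n (M.act (M.d x) b)) = sgn (-n) • φ (M.p n (M.act x (A.d (A.eps b))))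
      rw [A.eps_of_mem hb]
      have h := M.leibniz hx b
      have h' : φ (M.p n (M.d (M.act x b))) = 0 := by
        rw [show n = (n - 1) + 1 by ring, M.p_d, hφ]
      rw [h, map_add, map_add, ← eq_neg_iff_add_eq_zero] at h'
      rw [h']
      by_cases hn : n = k + (m + 1)
      · subst hn
        simp only [sgn_neg, sgn_add, smul_smul, map_zsmul, sgn_one]
        rw [show sgn k * (sgn m * -1) * sgn m = - (sgn k * (sgn m * sgn m)) by ring, sgn_mul_self]
        simp
      · simp [M.p_ne (M.act_deg hx (A.d_deg hb)) (n := n) (Ne.symm hn)] }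

theorem right_ghost_step (M : DGMod K A) : ∃ (I : DGMod K A) (f : CMap M I), IsHtpyInj I ∧
    IsGhost (coneOut f) := by
  obtain ⟨E, _, _, φ', hE, hφ'⟩ := exists_injective_embedding (K := K) (M.carrier ⧸ LinearMap.range M.d)
  let φ : M.carrier →ₗ[K] E := φ' ∘ₗ Submodule.mkQ _
  have hφ : ∀ x, φ (M.d x) = 0 := fun x => by
    have : (LinearMap.range M.d).mkQ (M.d x) = 0 := by simp
    simp only [φ, LinearMap.comp_apply, this, map_zero]
  have hφ2 : ∀ x, φ x = 0 → ∃ y, x = M.d y := fun x hx => by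
    have : (LinearMap.range M.d).mkQ x = 0 := hφ' (by rw [map_zero]; exact hx)
    rw [Submodule.mkQ_apply, Submodule.Quotient.mk_eq_zero] at this
    obtain ⟨y, hy⟩ := this
    exact ⟨y, hy.symm⟩
  refine ⟨prodMod fun n : ℤ => shiftMod (coindMod A E) (-n), prodLift fun n => coindMap φ hφ n,
    prod_inj fun j => shift_inj (coind_inj hE) _, ?_⟩
  rintro n ⟨w, x⟩ ⟨-, hx⟩ hd
  have hx1 : M.d x = 0 := by simpa using congrArg Prod.snd hd
  have hw := congrArg Prod.fst hd
  have hx2 : φ x = 0 := by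
    obtain ⟨F, hF⟩ := M.e_sum x
    rw [← hF, map_sum]
    refine Finset.sum_eq_zero fun i _ => ?_
    have h := congrArg (prodPr _ (n + 1)).toFun hw
    have h3 := congrArg (fun z : (coindMod A E).carrier => z.1 (A.e i)) h
    change sgn (-(n+1)) • (((prodPr _ (n + 1)).toFun w : (coindMod A E).carrier).1 (A.d (A.eps (A.e i)))) + φ (M.p (n + 1) (M.act x (A.e i))) = 0 at h3
    rw [A.eps_of_mem (A.e_deg i)] at h3
    simp only [map_zsmul, A.d_e, smul_zero, map_zero, zero_add] at h3
    rwa [M.p_of_mem (by simpa using M.act_deg hx (A.e_deg i))] at h3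
  obtain ⟨y, hy⟩ := hφ2 x hx2
  exact ⟨-y, by simpa using hy⟩
end

section
set_option linter.unusedVariables false
variable {K : Type} [CommRing K] {A : DGAlgebra K}

/-! ### Preadditive structure -/
section preadd
variable {M N : DGMod K A}
instance : Zero (CMap M N) := ⟨⟨0, zero_mem _, fun x => by simp⟩⟩
instance : Add (CMap M N) := ⟨fun f g => ⟨f.toFun + g.toFun, add_mem f.mem g.mem, fun x => by
  simp [f.comm, g.comm]⟩⟩
instance : Neg (CMap M N) := ⟨fun f => ⟨- f.toFun, neg_mem f.mem, fun x => by simp [f.comm]⟩⟩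
instance : Sub (CMap M N) := ⟨fun f g => ⟨f.toFun - g.toFun, sub_mem f.mem g.mem, fun x => by
  simp [f.comm, g.comm]⟩⟩
instance : SMul ℕ (CMap M N) := ⟨fun n f => ⟨n • f.toFun, nsmul_mem f.mem n, fun x => by
  simp [f.comm]⟩⟩
instance : SMul ℤ (CMap M N) := ⟨fun n f => ⟨n • f.toFun, zsmul_mem f.mem n, fun x => by
  simp [f.comm]⟩⟩
instance : AddCommGroup (CMap M N) :=
  Function.Injective.addCommGroup CMap.toFun (fun _ _ h => CMap.ext h) rfl (fun _ _ => rfl)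
    (fun _ => rfl) (fun _ _ => rfl) (fun _ _ => rfl) (fun _ _ => rfl)
end preadd

instance : Preadditive (DGModCat K A) where
  homGroup M N := inferInstanceAs (AddCommGroup (CMap M N))
  add_comp _ _ _ h i j := CMap.ext (by
    change j.toFun ∘ₗ (h.toFun + i.toFun) = j.toFun ∘ₗ h.toFun + j.toFun ∘ₗ i.toFun
    rw [LinearMap.comp_add])
  comp_add _ _ _ i j k := CMap.ext (by
    change (j.toFun + k.toFun) ∘ₗ i.toFun = j.toFun ∘ₗ i.toFun + k.toFun ∘ₗ i.toFun
    rw [LinearMap.add_comp])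

instance htpyCongr : Congruence (htpyRel K A) where
  equivalence := ⟨fun f => ⟨0, zero_mem _, by simp⟩,
    fun {f g} ⟨σ, h, e⟩ => ⟨-σ, neg_mem h, by
      rw [← neg_sub, e, LinearMap.comp_neg, LinearMap.neg_comp]; abel⟩,
    fun {f g h} ⟨σ, hσ, e⟩ ⟨τ, hτ, e'⟩ => ⟨σ + τ, add_mem hσ hτ, by
      rw [← sub_add_sub_cancel _ g.toFun, e, e', LinearMap.comp_add, LinearMap.add_comp]; abel⟩⟩
  comp_left := fun {X Y Z} f g g' ⟨σ, h, e⟩ => ⟨σ ∘ₗ f.toFun, by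
      simpa using homDeg_comp h f.mem, by
      rw [DGModCat.comp_toFun, DGModCat.comp_toFun, ← LinearMap.sub_comp, e, LinearMap.add_comp,
        LinearMap.comp_assoc, LinearMap.comp_assoc, LinearMap.comp_assoc, f.comm']⟩
  comp_right := fun {X Y Z f f'} g ⟨σ, h, e⟩ => ⟨g.toFun ∘ₗ σ, by
      simpa using homDeg_comp g.mem h, by
      rw [DGModCat.comp_toFun, DGModCat.comp_toFun, ← LinearMap.comp_sub, e, LinearMap.comp_add,
        ← LinearMap.comp_assoc, ← LinearMap.comp_assoc, ← LinearMap.comp_assoc, g.comm']⟩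

instance preHtpy : Preadditive (HtpyCat K A) :=
  Quotient.preadditive _ (fun X Y f f' g g' ⟨σ, h, e⟩ ⟨τ, h', e'⟩ => ⟨σ + τ, add_mem h h', by
    change f.toFun + g.toFun - (f'.toFun + g'.toFun) = _
    rw [add_sub_add_comm, e, e', LinearMap.comp_add, LinearMap.add_comp]; abel⟩)

/-- the class of a chain map -/
def hm {M N : DGMod K A} (f : CMap M N) : (⟨M⟩ : HtpyCat K A) ⟶ ⟨N⟩ := (htpyQ K A).map f

lemma hm_surj {M N : HtpyCat K A} (φ : M ⟶ N) : ∃ f : CMap M.as N.as, hm f = φ :=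
  (CategoryTheory.Quotient.functor (htpyRel K A)).map_surjective (X := M.as) (Y := N.as) φ

lemma hm_comp {M N P : DGModCat K A} (f : M ⟶ N) (g : N ⟶ P) : hm f ≫ hm g = hm (f ≫ g) := rfl
lemma hm_id (M : DGModCat K A) : hm (𝟙 M) = 𝟙 _ := rfl
lemma hm_add {M N : DGMod K A} (f g : CMap M N) : hm (f + g) = hm f + hm g := rfl
lemma hm_zero {M N : DGMod K A} : hm (0 : CMap M N) = 0 := rfl
lemma hm_neg {M N : DGMod K A} (f : CMap M N) : hm (- f) = - hm f := rfl
lemma hm_sub {M N : DGMod K A} (f g : CMap M N) : hm (f - g) = hm f - hm g := by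
  rw [sub_eq_add_neg, sub_eq_add_neg, hm_add, hm_neg]

lemma hm_eq_iff {M N : DGMod K A} (f g : CMap M N) : hm f = hm g ↔ htpyRel K A f g :=
  Quotient.functor_map_eq_iff (htpyRel K A) f g

lemma hm_eq_zero_iff {M N : DGMod K A} (f : CMap M N) : hm f = 0 ↔ IsNullHomotopic f := by
  rw [← hm_zero, hm_eq_iff]
  simp only [htpyRel, IsNullHomotopic]
  rw [show f.toFun - (0 : CMap M N).toFun = f.toFun from sub_zero _]

lemma hm_eq_of {M N : DGMod K A} (f g : CMap M N) (σ : M.carrier →ₗ[K] N.carrier)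
    (h : σ ∈ homDeg M N (-1)) (e : f.toFun - g.toFun = N.d ∘ₗ σ + σ ∘ₗ M.d) : hm f = hm g :=
  (hm_eq_iff f g).2 ⟨σ, h, e⟩

/-! ### Shift -/
lemma shift_rel {M N : DGModCat K A} (f g : M ⟶ N) (n : ℤ) (h : htpyRel K A f g) :
    htpyRel K A (X := shiftMod M n) (Y := shiftMod N n) (shiftMap f n) (shiftMap g n) := by
  obtain ⟨σ, h, e⟩ := h
  refine ⟨sgn n • σ, zsmul_mem (S := Submodule K _) ?_ _, ?_⟩
  · refine ⟨fun k x hx => ?_, h.2⟩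
    have := h.1 _ _ hx
    rwa [show k + n + -1 = k + -1 + n by ring] at this
  · change f.toFun - g.toFun = (sgn n • N.d) ∘ₗ (sgn n • σ) + (sgn n • σ) ∘ₗ (sgn n • M.d)
    rw [e]; ext x
    simp [sgn_smul_smul]

/-- shift functor on `H(A)` -/
@[reducible] def shF (n : ℤ) : HtpyCat K A ⥤ HtpyCat K A :=
  CategoryTheory.Quotient.lift (htpyRel K A)
    { obj := fun (M : DGModCat K A) => (⟨shiftMod M n⟩ : HtpyCat K A)
      map := fun f => hm (shiftMap f n)
      map_id := fun M => rfl
      map_comp := fun f g => rfl }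
    (fun M N f g h => (hm_eq_iff _ _).2 (shift_rel f g n h))

lemma shF_hm {M N : DGMod K A} (f : CMap M N) (n : ℤ) : (shF n).map (hm f) = hm (shiftMap f n) := rfl

/-- identity-on-carrier map -/
def castMap (M : DGMod K A) {a b : ℤ} (h : a = b) : CMap (shiftMod M a) (shiftMod M b) where
  toFun := LinearMap.id
  mem := ⟨fun k x hx => by subst h; simpa using hx, fun _ _ => rfl⟩
  comm x := by subst h; rfl

lemma eqToHom_cast (M : DGMod K A) {a b : ℤ} (h : a = b) (h') :
    eqToHom (X := (⟨shiftMod M a⟩ : HtpyCat K A)) (Y := ⟨shiftMod M b⟩) h' = hm (castMap M h) := by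
  subst h; rfl

/-- zero shift -/
def shZeroHom (M : DGMod K A) : CMap (shiftMod M 0) M where
  toFun := LinearMap.id
  mem := ⟨fun k x hx => by simpa using hx, fun _ _ => rfl⟩
  comm x := by simp [sgn_zero]
/-- zero shift -/
def shZeroInv (M : DGMod K A) : CMap M (shiftMod M 0) where
  toFun := LinearMap.id
  mem := ⟨fun k x hx => by simpa using hx, fun _ _ => rfl⟩
  comm x := by simp [sgn_zero]
/-- add shift -/
def shAddHom (M : DGMod K A) (a b : ℤ) : CMap (shiftMod M (a + b)) (shiftMod (shiftMod M a) b) where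
  toFun := LinearMap.id
  mem := ⟨fun k x hx => by
    change x ∈ M.deg (k + 0 + b + a)
    rwa [show k + 0 + b + a = k + (a + b) by ring], fun _ _ => rfl⟩
  comm x := by simp [sgn_add, mul_smul, smul_comm (sgn a)]
/-- add shift -/
def shAddInv (M : DGMod K A) (a b : ℤ) : CMap (shiftMod (shiftMod M a) b) (shiftMod M (a + b)) where
  toFun := LinearMap.id
  mem := ⟨fun k x hx => by
    change x ∈ M.deg (k + 0 + (a + b))
    have hx : x ∈ M.deg (k + b + a) := hx
    rwa [show k + b + a = k + 0 + (a + b) by ring] at hx, fun _ _ => rfl⟩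
  comm x := by simp [sgn_add, mul_smul, smul_comm (sgn a)]

/-- shift core -/
@[reducible] def shCore (A : DGAlgebra K) : ShiftMkCore (HtpyCat K A) ℤ where
  F := shF
  zero := NatIso.ofComponents (fun X => ⟨hm (shZeroHom X.as), hm (shZeroInv X.as), rfl, rfl⟩) (by
    intro X Y φ; obtain ⟨f, rfl⟩ := hm_surj φ; rfl)
  add a b := NatIso.ofComponents (fun X => ⟨hm (shAddHom X.as a b), hm (shAddInv X.as a b), rfl, rfl⟩) (by
    intro X Y φ; obtain ⟨f, rfl⟩ := hm_surj φ; rfl)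
  assoc_hom_app a b c X :=
    Eq.trans (b := hm (castMap X.as (add_assoc a b c)) ≫ hm (shAddHom X.as a (b + c)) ≫
      hm (shAddHom (shiftMod X.as a) b c)) rfl
      (congrArg (· ≫ hm (shAddHom X.as a (b + c)) ≫ hm (shAddHom (shiftMod X.as a) b c))
        (eqToHom_cast X.as (add_assoc a b c) _).symm)
  zero_add_hom_app n X :=
    Eq.trans (b := hm (castMap X.as (zero_add n)) ≫ hm (shiftMap (shZeroInv X.as) n)) rfl
      (congrArg (· ≫ hm (shiftMap (shZeroInv X.as) n)) (eqToHom_cast X.as (zero_add n) _).symm)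
  add_zero_hom_app n X :=
    Eq.trans (b := hm (castMap X.as (add_zero n)) ≫ hm (shZeroInv (shiftMod X.as n))) rfl
      (congrArg (· ≫ hm (shZeroInv (shiftMod X.as n))) (eqToHom_cast X.as (add_zero n) _).symm)

instance hsHtpy : HasShift (HtpyCat K A) ℤ := hasShiftMk _ _ (shCore A)

instance addHtpy (n : ℤ) : (shiftFunctor (HtpyCat K A) n).Additive where
  map_add := fun {X Y f g} => by
    obtain ⟨f, rfl⟩ := hm_surj f
    obtain ⟨g, rfl⟩ := hm_surj g
    rfl

instance zoHtpy : Limits.HasZeroObject (HtpyCat K A) := ⟨⟨zeroMod A⟩, by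
  rw [Limits.IsZero.iff_id_eq_zero]
  exact congrArg hm (CMap.ext (LinearMap.ext fun x => rfl))⟩

lemma shiftFunctor_hm {M N : DGMod K A} (f : CMap M N) (n : ℤ) :
    (shiftFunctor (HtpyCat K A) n).map (hm f) = hm (shiftMap f n) := rfl

/-- commutation -/
def shComm (M : DGMod K A) (a b : ℤ) : CMap (shiftMod (shiftMod M a) b) (shiftMod (shiftMod M b) a) where
  toFun := LinearMap.id
  mem := ⟨fun k x hx => by
    change x ∈ M.deg (k + 0 + a + b)
    have hx : x ∈ M.deg (k + b + a) := hx
    rwa [show k + b + a = k + 0 + a + b by ring] at hx, fun _ _ => rfl⟩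
  comm x := by simp [smul_comm (sgn a)]

lemma shiftFunctorComm_hm (M : DGMod K A) (a b : ℤ) :
    (shiftFunctorComm (HtpyCat K A) a b).hom.app ⟨M⟩ = hm (shComm M a b) := by
  have h1 : (shiftFunctorAdd' (HtpyCat K A) b a (a + b) (add_comm b a)).hom.app ⟨M⟩ =
      hm (castMap M (add_comm a b)) ≫ hm (shAddHom M b a) := by
    have h : (shiftFunctorAdd' (HtpyCat K A) b a (a + b) (add_comm b a)).hom.app ⟨M⟩ =
      eqToHom (by rw [add_comm a b]) ≫ (shiftFunctorAdd (HtpyCat K A) b a).hom.app ⟨M⟩ := by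
      rw [shiftFunctorAdd', Iso.trans_hom, NatTrans.comp_app, eqToIso.hom, eqToHom_app]
    exact h.trans (congrArg (· ≫ hm (shAddHom M b a)) (eqToHom_cast M (add_comm a b) _))
  have h2 : (shiftFunctorComm (HtpyCat K A) a b).hom.app ⟨M⟩ =
      (shiftFunctorAdd (HtpyCat K A) a b).inv.app ⟨M⟩ ≫
       (shiftFunctorAdd' (HtpyCat K A) b a (a + b) (add_comm b a)).hom.app ⟨M⟩ := by
    rw [shiftFunctorComm_eq _ _ _ (a + b) rfl, shiftFunctorAdd'_eq_shiftFunctorAdd]; rfl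
  rw [h2, h1]
  rfl
end

section
set_option linter.unusedVariables false
variable {K : Type} [CommRing K] {A : DGAlgebra K}

/-- the standard triangle -/
@[reducible] def stdTri {M N : DGMod K A} (f : CMap M N) : Triangle (HtpyCat K A) :=
  Triangle.mk (X := ⟨M⟩) (Y := ⟨N⟩) (Z := ⟨coneMod f⟩) (hm f) (hm (coneIn f)) (hm (coneOut f))

/-- distinguished triangles in `H(A)` -/
def distH (A : DGAlgebra K) : Set (Triangle (HtpyCat K A)) :=
  {T | ∃ (M N : DGMod K A) (f : CMap M N), Nonempty (T ≅ stdTri f)}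

section conf
variable {L M N : DGMod K A} (u : CMap L M) (v : CMap M N)
  (r : M.carrier →ₗ[K] L.carrier) (s : N.carrier →ₗ[K] M.carrier)
  (hr : r ∈ homDeg M L 0) (hs : s ∈ homDeg N M 0)
  (hru : ∀ x, r (u.toFun x) = x) (hvs : ∀ x, v.toFun (s x) = x)
  (hsv : ∀ x, s (v.toFun x) = x - u.toFun (r x))

lemma conf_vu (hru : ∀ x, r (u.toFun x) = x) (hvs : ∀ x, v.toFun (s x) = x)
    (hsv : ∀ x, s (v.toFun x) = x - u.toFun (r x)) (x : L.carrier) : v.toFun (u.toFun x) = 0 := by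
  rw [← hvs (v.toFun (u.toFun x)), hsv, hru, sub_self, map_zero]

lemma conf_rs (hru : ∀ x, r (u.toFun x) = x) (hvs : ∀ x, v.toFun (s x) = x)
    (hsv : ∀ x, s (v.toFun x) = x - u.toFun (r x)) (x : N.carrier) : r (s x) = 0 := by
  have := hsv (s x)
  rw [hvs] at this
  have h2 : u.toFun (r (s x)) = 0 := by
    have h3 := sub_eq_self.1 this.symm
    exact h3
  rw [← hru (r (s x)), h2, map_zero]

lemma conf_ds (hvs : ∀ x, v.toFun (s x) = x)
    (hsv : ∀ x, s (v.toFun x) = x - u.toFun (r x)) (x : N.carrier) : M.d (s x) = s (N.d x) + u.toFun (r (M.d (s x))) := by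
  have h := hsv (M.d (s x))
  rw [v.comm, hvs] at h
  rw [h]; abel

/-- connecting map -/
def confW : CMap N (shiftMod L 1) where
  toFun := - (r ∘ₗ M.d ∘ₗ s)
  mem := by
    refine neg_mem (S := Submodule K _) ⟨fun k x hx => ?_, fun x a => ?_⟩
    · have h1 := hs.1 _ _ hx
      have h2 := hr.1 _ _ (M.d_deg h1)
      simp only [add_zero] at h2
      simpa using h2
    · change r (M.d (s (N.act x a))) = L.act (r (M.d (s x))) a
      revert x
      suffices h : (r ∘ₗ M.d ∘ₗ s) ∘ₗ N.act.flip a = (L.act.flip a) ∘ₗ (r ∘ₗ M.d ∘ₗ s) from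
        fun x => LinearMap.congr_fun h x
      refine internal_ext N.internal fun k x hx => ?_
      change r (M.d (s (N.act x a))) = L.act (r (M.d (s x))) a
      have h1 : s x ∈ M.deg k := by simpa using hs.1 _ _ hx
      rw [hs.2, M.leibniz h1, map_add, map_zsmul, hr.2, hr.2, conf_rs u v r s hru hvs hsv]
      simp
  comm x := by
    have h := conf_ds u v r s hvs hsv x
    have h2 : M.d (s (N.d x)) = - u.toFun (L.d (r (M.d (s x)))) := by
      have := congrArg M.d h
      rw [M.d_sq, map_add, ← u.comm] at this
      exact eq_neg_of_add_eq_zero_left this.symm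
    simp [sgn_one, h2, hru]

/-- comparison -/
def confPhi : CMap (coneMod u) N where
  toFun := v.toFun ∘ₗ LinearMap.fst K _ _
  mem := ⟨fun k x hx => v.mem.1 _ _ hx.1, fun x a => by simp [v.mem.2]⟩
  comm x := by simp [v.comm, conf_vu u v r s hru hvs hsv]

/-- comparison -/
def confPsi : CMap N (coneMod u) where
  toFun := s.prod (confW u v r s hr hs hru hvs hsv).toFun
  mem := ⟨fun k x hx => ⟨hs.1 _ _ hx, (confW u v r s hr hs hru hvs hsv).mem.1 _ _ hx⟩,
    fun x a => Prod.ext (hs.2 _ _) ((confW u v r s hr hs hru hvs hsv).mem.2 _ _)⟩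
  comm x := by
    refine Prod.ext ?_ ?_
    · have h := conf_ds u v r s hvs hsv x
      change s (N.d x) = M.d (s x) + u.toFun (- (r (M.d (s x))))
      rw [map_neg, ← sub_eq_add_neg]
      exact eq_sub_of_add_eq h.symm
    · have h := (confW u v r s hr hs hru hvs hsv).comm x
      refine h.trans ?_
      simp [sgn_one]

/-- the triangle of a conflation -/
def confIso : Triangle.mk (X := (⟨L⟩ : HtpyCat K A)) (Y := ⟨M⟩) (Z := ⟨N⟩) (hm u) (hm v)
    (hm (confW u v r s hr hs hru hvs hsv)) ≅ stdTri u := by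
  have e1 : hm (confPsi u v r s hr hs hru hvs hsv) ≫ hm (confPhi u v r s hru hvs hsv) = 𝟙 _ :=
    congrArg hm (CMap.ext (LinearMap.ext fun x => hvs x))
  have e2 : hm (confPhi u v r s hru hvs hsv) ≫ hm (confPsi u v r s hr hs hru hvs hsv) = 𝟙 _ := by
    symm
    refine hm_eq_of (𝟙 _ : (coneMod u : DGModCat K A) ⟶ _) _
      ((0 : (coneMod u).carrier →ₗ[K] M.carrier).prod (r ∘ₗ LinearMap.fst K _ _)) ?_ ?_
    · refine ⟨fun k x hx => ⟨zero_mem _, ?_⟩, fun x a => ?_⟩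
      · simpa using hr.1 _ _ hx.1
      · simp [hr.2]
    · refine LinearMap.ext fun x => Prod.ext ?_ ?_
      · change x.1 - s (v.toFun x.1) = (M.d 0 + u.toFun (r x.1)) + 0
        rw [hsv]; simp
      · change x.2 - (-(r (M.d (s (v.toFun x.1))))) = -(L.d (r x.1)) + r (M.d x.1 + u.toFun x.2)
        rw [hsv]; simp only [map_sub, map_add, ← u.comm, hru]; abel
  have e3 : hm (confPsi u v r s hr hs hru hvs hsv) ≫ hm (coneOut u) =
    hm (confW u v r s hr hs hru hvs hsv) := rfl
  have e4 : hm v ≫ hm (confPsi u v r s hr hs hru hvs hsv) = hm (coneIn u) := by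
    have : hm v = hm (coneIn u) ≫ hm (confPhi u v r s hru hvs hsv) := rfl
    rw [this, Category.assoc, e2, Category.comp_id]
  refine Triangle.isoMk _ _ (Iso.refl _) (Iso.refl _) ⟨_, _, e1, e2⟩ ?_ ?_ ?_
  · exact (Category.comp_id _).trans (Category.id_comp _).symm
  · exact e4.trans (Category.id_comp _).symm
  · refine Eq.trans ?_ e3.symm
    exact (congrArg (hm (confW u v r s hr hs hru hvs hsv) ≫ ·) (CategoryTheory.Functor.map_id _ _)).trans (Category.comp_id _)
end conf

lemma distH_rotate (T : Triangle (HtpyCat K A)) (hT : T ∈ distH A) : T.rotate ∈ distH A := by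
  obtain ⟨M, N, f, ⟨e⟩⟩ := hT
  refine ⟨_, _, coneIn f, ⟨(rotate _).mapIso e ≪≫ ?_⟩⟩
  have h1 : LinearMap.fst K N.carrier M.carrier ∈ homDeg (coneMod f) N 0 :=
    ⟨fun k x hx => by simpa using hx.1, fun x a => by simp⟩
  have h2 : LinearMap.inr K N.carrier M.carrier ∈ homDeg (shiftMod M 1) (coneMod f) 0 :=
    ⟨fun k x hx => ⟨zero_mem _, by simpa using hx⟩, fun x a => by simp⟩
  have h3 := confIso (coneIn f) (coneOut f) (LinearMap.fst K _ _) (LinearMap.inr K _ _)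
    h1 h2 (fun x => rfl) (fun x => rfl) (fun x => by ext <;> simp)
  refine eqToIso ?_ ≪≫ h3
  change Triangle.mk _ _ _ = Triangle.mk _ _ _
  congr 1
  exact congrArg hm (CMap.ext (LinearMap.ext fun x => by
    change -(f.toFun x) = -(N.d 0 + f.toFun x)
    simp))


lemma distH_shift (T : Triangle (HtpyCat K A)) (hT : T ∈ distH A) :
    (Triangle.shiftFunctor _ (-1)).obj T ∈ distH A := by
  obtain ⟨M, N, f, ⟨e⟩⟩ := hT
  refine ⟨_, _, shiftMap f (-1), ⟨Functor.mapIso _ e ≪≫ ?_⟩⟩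
  let φ : CMap (shiftMod (coneMod f) (-1)) (coneMod (shiftMap f (-1))) :=
    { toFun := LinearMap.prodMap LinearMap.id (-LinearMap.id)
      mem := ⟨fun k x hx => ⟨by simpa using hx.1, by
        have h := neg_mem hx.2
        change - x.2 ∈ M.deg (k + 0 + 1 + -1)
        rwa [show k + 0 + 1 + -1 = k + -1 + 1 by ring]⟩, fun x a => by simp⟩
      comm := fun x => by simp [sgn_neg_one]; abel }
  let ψ : CMap (coneMod (shiftMap f (-1))) (shiftMod (coneMod f) (-1)) :=
    { toFun := LinearMap.prodMap LinearMap.id (-LinearMap.id)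
      mem := ⟨fun k x hx => ⟨by simpa using hx.1, by
        have h : - x.2 ∈ M.deg (k + 1 + -1) := neg_mem hx.2
        change - x.2 ∈ M.deg (k + 0 + -1 + 1)
        rwa [show k + 0 + -1 + 1 = k + 1 + -1 by ring]⟩, fun x a => by simp⟩
      comm := fun x => by simp [sgn_neg_one]; abel }
  have e1 : hm φ ≫ hm ψ = 𝟙 _ := congrArg hm (CMap.ext (LinearMap.ext fun x => Prod.ext rfl (neg_neg _)))
  have e2 : hm ψ ≫ hm φ = 𝟙 _ := congrArg hm (CMap.ext (LinearMap.ext fun x => Prod.ext rfl (neg_neg _)))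
  have hc := shiftFunctorComm_hm M 1 (-1)
  have hn : ∀ {X Y : HtpyCat K A} (g : X ⟶ Y), (-1 : ℤ).negOnePow • g = - g := fun g => by
    simp
  let I2 : (⟨shiftMod N (-1)⟩ : HtpyCat K A) ≅ ⟨shiftMod N (-1)⟩ :=
    ⟨- 𝟙 _, - 𝟙 _, by simp, by simp⟩
  refine Triangle.isoMk _ _ (Iso.refl _) I2 ⟨hm φ, hm ψ, e1, e2⟩ ?_ ?_ ?_
  · refine (congrArg (· ≫ I2.hom) (hn _)).trans ?_
    refine Eq.trans ?_ (Category.id_comp _).symm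
    refine Eq.trans (Preadditive.comp_neg _ _) ?_
    refine (congrArg Neg.neg (Category.comp_id _)).trans ?_
    exact neg_neg _
  · refine (congrArg (· ≫ hm φ) (hn _)).trans ?_
    refine Eq.trans ?_ (Eq.symm (Preadditive.neg_comp _ _))
    refine Eq.trans (Preadditive.neg_comp _ _) ?_
    refine congrArg Neg.neg (Eq.trans ?_ (Category.id_comp _).symm)
    exact congrArg hm (CMap.ext (LinearMap.ext fun x => Prod.ext rfl neg_zero))
  · refine (congrArg (_ ≫ ·) (CategoryTheory.Functor.map_id _ _)).trans ?_
    refine (Category.comp_id _).trans ?_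
    refine (hn _).trans ?_
    refine (congrArg Neg.neg (congrArg (_ ≫ ·) hc)).trans ?_
    exact congrArg hm (CMap.ext (LinearMap.ext fun x => rfl))

lemma isZero_coneId (M : DGMod K A) : Limits.IsZero (⟨coneMod (𝟙 (M : DGModCat K A))⟩ : HtpyCat K A) := by
  rw [Limits.IsZero.iff_id_eq_zero]
  refine hm_eq_of (𝟙 (coneMod (𝟙 (M : DGModCat K A)) : DGModCat K A)) 0
    ((0 : M.carrier × M.carrier →ₗ[K] M.carrier).prod (LinearMap.fst K _ _)) ?_ ?_
  · exact ⟨fun k x hx => ⟨zero_mem _, by simpa using hx.1⟩, fun x a => by simp⟩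
  · refine LinearMap.ext fun x => Prod.ext ?_ ?_
    · change x.1 - 0 = (M.d 0 + x.1) + 0
      simp
    · change x.2 - 0 = -(M.d x.1) + (M.d x.1 + x.2)
      simp

lemma distH_contractible (X : HtpyCat K A) : contractibleTriangle X ∈ distH A := by
  refine ⟨X.as, X.as, 𝟙 (X.as : DGModCat K A), ⟨?_⟩⟩
  have h := isZero_coneId X.as
  refine Triangle.isoMk _ _ (Iso.refl _) (Iso.refl _) h.isoZero.symm ?_ (h.eq_of_tgt _ _) ?_
  · exact (Category.comp_id _).trans (Category.id_comp _).symm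
  · exact (Limits.isZero_zero _).eq_of_src _ _

lemma distH_complete_std {M N M' N' : DGMod K A} (f : CMap M N) (f' : CMap M' N')
    (a : (stdTri f).obj₁ ⟶ (stdTri f').obj₁) (b : (stdTri f).obj₂ ⟶ (stdTri f').obj₂)
    (h : (stdTri f).mor₁ ≫ b = a ≫ (stdTri f').mor₁) :
    ∃ φ : stdTri f ⟶ stdTri f', φ.hom₁ = a ∧ φ.hom₂ = b := by
  obtain ⟨a, rfl⟩ := hm_surj (M := ⟨M⟩) (N := ⟨M'⟩) a
  obtain ⟨b, rfl⟩ := hm_surj (M := ⟨N⟩) (N := ⟨N'⟩) b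
  obtain ⟨σ, hσ, e⟩ := (hm_eq_iff _ _).1 h
  have e : ∀ x, b.toFun (f.toFun x) - f'.toFun (a.toFun x) = N'.d (σ x) + σ (M.d x) :=
    LinearMap.congr_fun e
  let c : CMap (coneMod f) (coneMod f') :=
    { toFun := (b.toFun ∘ₗ LinearMap.fst K _ _ + σ ∘ₗ LinearMap.snd K _ _).prod
        (a.toFun ∘ₗ LinearMap.snd K _ _)
      mem := ⟨fun k x hx => ⟨add_mem (b.mem.1 _ _ hx.1) (by
          have := hσ.1 _ _ hx.2
          simpa using this), by simpa using a.mem.1 _ _ hx.2⟩, fun x y => by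
          simp [a.mem.2, b.mem.2, hσ.2]⟩
      comm := fun x => by
        refine Prod.ext ?_ ?_
        · have := e x.2
          change b.toFun (N.d x.1 + f.toFun x.2) + σ (- M.d x.2) =
            N'.d (b.toFun x.1 + σ x.2) + f'.toFun (a.toFun x.2)
          rw [sub_eq_iff_eq_add] at this
          rw [map_add, this, map_neg, map_add, b.comm]; abel
        · simp [a.comm] }
  refine ⟨Triangle.homMk _ _ (hm a) (hm b) (hm c) h ?_ ?_, rfl, rfl⟩
  · exact congrArg hm (CMap.ext (LinearMap.ext fun x => Prod.ext
      (show b.toFun x + σ 0 = b.toFun x by simp) (show a.toFun 0 = 0 by simp)))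
  · rfl

lemma distH_complete (T₁ T₂ : Triangle (HtpyCat K A)) (hT₁ : T₁ ∈ distH A) (hT₂ : T₂ ∈ distH A)
    (a : T₁.obj₁ ⟶ T₂.obj₁) (b : T₁.obj₂ ⟶ T₂.obj₂) (fac : T₁.mor₁ ≫ b = a ≫ T₂.mor₁) :
    ∃ (c : T₁.obj₃ ⟶ T₂.obj₃), T₁.mor₂ ≫ c = b ≫ T₂.mor₂ ∧
      T₁.mor₃ ≫ a⟦(1 : ℤ)⟧' = c ≫ T₂.mor₃ := by
  obtain ⟨K₁, L₁, φ₁, ⟨e₁⟩⟩ := hT₁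
  obtain ⟨K₂, L₂, φ₂, ⟨e₂⟩⟩ := hT₂
  obtain ⟨γ, h1, h2⟩ := distH_complete_std φ₁ φ₂ (e₁.inv.hom₁ ≫ a ≫ e₂.hom.hom₁)
    (e₁.inv.hom₂ ≫ b ≫ e₂.hom.hom₂) (by
      have h1 := e₁.inv.comm₁
      have h2 := e₂.hom.comm₁
      rw [reassoc_of% h1, reassoc_of% fac, h2]
      simp only [Category.assoc])
  let δ := e₁.hom ≫ γ ≫ e₂.inv
  have d1 : δ.hom₁ = a := by simp [δ, h1]
  have d2 : δ.hom₂ = b := by simp [δ, h2]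
  refine ⟨δ.hom₃, ?_, ?_⟩
  · rw [← d2]; exact δ.comm₂
  · rw [← d1]; exact δ.comm₃

lemma distH_iso (T₁ : Triangle (HtpyCat K A)) (h : T₁ ∈ distH A) (T₂ : Triangle (HtpyCat K A)) (e : T₂ ≅ T₁) :
    T₂ ∈ distH A := by
  obtain ⟨X, Y, f, ⟨e'⟩⟩ := h
  exact ⟨X, Y, f, ⟨e ≪≫ e'⟩⟩

lemma distH_invRotate (T : Triangle (HtpyCat K A)) (hT : T ∈ distH A) : T.invRotate ∈ distH A :=
  distH_iso _ (distH_shift _ (distH_rotate _ (distH_rotate _ hT))) _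
    ((invRotateIsoRotateRotateShiftFunctorNegOne _).app T)

instance ptHtpy : Pretriangulated (HtpyCat K A) where
  distinguishedTriangles := distH A
  isomorphic_distinguished := distH_iso
  contractible_distinguished := distH_contractible
  distinguished_cocone_triangle {X Y} f := by
    obtain ⟨f, rfl⟩ := hm_surj f
    exact ⟨_, _, _, _, _, f, ⟨Iso.refl (stdTri f)⟩⟩
  rotate_distinguished_triangle T := ⟨distH_rotate T, fun hT =>
    distH_iso _ (distH_invRotate _ hT) _ ((triangleRotation _).unitIso.app T)⟩
  complete_distinguished_triangle_morphism := distH_complete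

lemma stdTri_dist {M N : DGMod K A} (f : CMap M N) : stdTri f ∈ distTriang (HtpyCat K A) :=
  ⟨_, _, f, ⟨Iso.refl _⟩⟩

lemma distH_conf {L M N : DGModCat K A} (u : L ⟶ M) (v : M ⟶ N) (h : IsConflation u v) :
    ∃ w : (htpyQ K A).obj N ⟶ (shiftFunctor (HtpyCat K A) (1 : ℤ)).obj ((htpyQ K A).obj L),
      Triangle.mk ((htpyQ K A).map u) ((htpyQ K A).map v) w ∈
        (distinguishedTriangles : Set (Triangle (HtpyCat K A))) := by
  obtain ⟨hu, hv, huv, r, hr, hru⟩ := h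
  have hru : ∀ x, r (u.toFun x) = x := LinearMap.congr_fun hru
  have hvu : ∀ x, v.toFun (u.toFun x) = 0 := fun x => by
    have : u.toFun x ∈ LinearMap.ker v.toFun := huv ▸ ⟨x, rfl⟩
    exact this
  -- the map m ↦ m - u r m factors through v
  let p : M.carrier →ₗ[K] M.carrier := LinearMap.id - u.toFun ∘ₗ r
  have hp : LinearMap.ker v.toFun ≤ LinearMap.ker p := by
    rw [← huv]
    rintro _ ⟨x, rfl⟩
    simp [p, hru]
  have hinj : ∀ x y, v.toFun x = v.toFun y → p x = p y := fun x y hxy => by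
    rw [← sub_eq_zero, ← map_sub]
    exact hp (by simp [hxy])
  let s : N.carrier →ₗ[K] M.carrier :=
    { toFun := fun n => p (hv n).choose
      map_add' := fun a b => by
        rw [← map_add]; apply hinj
        rw [map_add, (hv a).choose_spec, (hv b).choose_spec, (hv (a+b)).choose_spec]
      map_smul' := fun c a => by
        rw [RingHom.id_apply, ← map_smul]; apply hinj
        rw [map_smul, (hv a).choose_spec, (hv (c • a)).choose_spec] }
  have hsv : ∀ x, s (v.toFun x) = p x := fun x => hinj _ _ (hv (v.toFun x)).choose_spec
  have hvp : ∀ x, v.toFun (p x) = v.toFun x := fun x => by simp [p, hvu]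
  have hvs : ∀ x, v.toFun (s x) = x := fun x => by
    obtain ⟨y, rfl⟩ := hv x
    rw [hsv, hvp]
  have hpm : p ∈ homDeg M M 0 := ⟨fun k x hx => by
    have h1 := u.deg (hr.1 _ _ hx)
    have h2 : x ∈ M.deg (k + 0) := by simpa using hx
    exact sub_mem h2 h1, fun x a => by simp [p, hr.2, u.mem.2]⟩
  have hs : s ∈ homDeg N M 0 := by
    refine ⟨fun k x hx => ?_, fun x a => ?_⟩
    · obtain ⟨y, rfl⟩ := hv x
      have h1 : v.toFun y = v.toFun (M.p k y) := by
        have : v.toFun ∘ₗ M.p k = N.p k ∘ₗ v.toFun := by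
          refine internal_ext M.internal fun i x' hx' => ?_
          simp only [LinearMap.comp_apply]
          by_cases h : i = k
          · subst h; rw [M.p_of_mem hx', N.p_of_mem (v.deg hx')]
          · rw [M.p_ne hx' h, N.p_ne (v.deg hx') h, map_zero]
        rw [← N.p_of_mem hx]; exact (LinearMap.congr_fun this y).symm
      rw [h1, hsv]
      exact hpm.1 _ _ (M.p_mem k y)
    · obtain ⟨y, rfl⟩ := hv x
      rw [← v.mem.2, hsv, hsv, hpm.2]
  exact ⟨_, _, _, u, ⟨confIso u v r s hr hs hru hvs hsv⟩⟩
end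

section
set_option linter.unusedVariables false
variable {K : Type} [CommRing K] {A : DGAlgebra K}

section octa
variable {M N P : DGMod K A} (f : CMap M N) (g : CMap N P)

/-- composite of chain maps -/
@[reducible] def cc : CMap M P := CategoryStruct.comp (obj := DGModCat K A) f g

/-- first octahedron map -/
def octM1 : CMap (coneMod f) (coneMod (cc f g)) where
  toFun := g.toFun.prodMap LinearMap.id
  mem := ⟨fun k x hx => ⟨g.mem.1 _ _ hx.1, by simpa using hx.2⟩, fun x a => by simp [g.mem.2]⟩
  comm x := by
    refine Prod.ext ?_ rfl
    change g.toFun (N.d x.1 + f.toFun x.2) = P.d (g.toFun x.1) + g.toFun (f.toFun x.2)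
    rw [map_add, g.comm]

/-- second octahedron map -/
def octM3 : CMap (coneMod (cc f g)) (coneMod g) where
  toFun := LinearMap.id.prodMap f.toFun
  mem := ⟨fun k x hx => ⟨by simpa using hx.1, by simpa using f.mem.1 _ _ hx.2⟩,
    fun x a => by simp [f.mem.2]⟩
  comm x := by
    refine Prod.ext rfl ?_
    change f.toFun (- M.d x.2) = - N.d (f.toFun x.2)
    rw [map_neg, f.comm]

/-- comparison -/
def octPhi : CMap (coneMod (octM1 f g)) (coneMod g) where
  toFun := (LinearMap.fst K P.carrier M.carrier ∘ₗ LinearMap.fst K _ _).prod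
    (f.toFun ∘ₗ LinearMap.snd K P.carrier M.carrier ∘ₗ LinearMap.fst K _ _ +
      LinearMap.fst K N.carrier M.carrier ∘ₗ LinearMap.snd K _ _)
  mem := ⟨fun k x hx => ⟨by simpa using hx.1.1, add_mem (by simpa using f.mem.1 _ _ hx.1.2)
    (by simpa using hx.2.1)⟩, fun x a => by simp [f.mem.2]⟩
  comm x := by
    obtain ⟨⟨p, m⟩, ⟨n, m'⟩⟩ := x
    refine Prod.ext ?_ ?_
    · change (P.d p + g.toFun (f.toFun m)) + g.toFun n = P.d p + g.toFun (f.toFun m + n)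
      rw [map_add]; abel
    · change f.toFun (- M.d m + m') + - (N.d n + f.toFun m') = - N.d (f.toFun m + n)
      simp only [map_add, map_neg, f.comm]; abel

/-- comparison -/
def octPsi : CMap (coneMod g) (coneMod (octM1 f g)) where
  toFun := (LinearMap.inl K P.carrier M.carrier).prodMap (LinearMap.inl K N.carrier M.carrier)
  mem := ⟨fun k x hx => ⟨⟨by simpa using hx.1, zero_mem _⟩, ⟨by simpa using hx.2, zero_mem _⟩⟩,
    fun x a => by simp⟩
  comm x := by
    obtain ⟨p, n⟩ := x
    refine Prod.ext (Prod.ext ?_ ?_) (Prod.ext ?_ ?_)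
    · change P.d p + g.toFun n = P.d p + g.toFun (f.toFun 0) + g.toFun n
      simp
    · change (0 : M.carrier) = - M.d 0 + 0
      simp
    · change - N.d n = - (N.d n + f.toFun 0)
      simp
    · change (0 : M.carrier) = - - M.d 0
      simp

lemma oct_e1 : hm (octPsi f g) ≫ hm (octPhi f g) = 𝟙 _ :=
  congrArg hm (CMap.ext (LinearMap.ext fun x => Prod.ext rfl (by
    change f.toFun 0 + x.2 = x.2
    simp)))

lemma oct_e2 : hm (octPhi f g) ≫ hm (octPsi f g) = 𝟙 _ := by
  symm
  refine hm_eq_of (𝟙 _ : (coneMod (octM1 f g) : DGModCat K A) ⟶ _) _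
    ((0 : (coneMod (octM1 f g)).carrier →ₗ[K] P.carrier × M.carrier).prod
      ((0 : (coneMod (octM1 f g)).carrier →ₗ[K] N.carrier).prod
      (LinearMap.snd K P.carrier M.carrier ∘ₗ LinearMap.fst K _ _))) ?_ ?_
  · refine ⟨fun k x hx => ⟨zero_mem _, zero_mem _, ?_⟩, fun x a => ?_⟩
    · have := hx.1.2
      change x.1.2 ∈ M.deg (k + -1 + 1 + 1)
      rwa [show k + -1 + 1 + 1 = k + 1 by ring]
    · simp; rfl
  · refine LinearMap.ext fun x => ?_
    obtain ⟨⟨p, m⟩, ⟨n, m'⟩⟩ := x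
    refine Prod.ext (Prod.ext ?_ ?_) (Prod.ext ?_ ?_)
    · change p - p = (P.d 0 + g.toFun (f.toFun 0)) + g.toFun 0 + 0
      simp
    · change m - 0 = -M.d 0 + m + 0
      simp
    · change n - (f.toFun m + n) = - (N.d 0 + f.toFun m) + 0
      simp
    · change m' - 0 = - - M.d m + (- M.d m + m')
      simp

/-- the octahedron triangle -/
def octIso : Triangle.mk (X := (⟨coneMod f⟩ : HtpyCat K A)) (Y := ⟨coneMod (cc f g)⟩) (Z := ⟨coneMod g⟩)
    (hm (octM1 f g)) (hm (octM3 f g)) (hm (coneOut g) ≫ hm (shiftMap (coneIn f) 1)) ≅ stdTri (octM1 f g) := by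
  have e4 : hm (octM3 f g) ≫ hm (octPsi f g) = hm (coneIn (octM1 f g)) := by
    have : hm (octM3 f g) = hm (coneIn (octM1 f g)) ≫ hm (octPhi f g) :=
      congrArg hm (CMap.ext (LinearMap.ext fun x => Prod.ext rfl (add_zero _).symm))
    rw [this, Category.assoc, oct_e2, Category.comp_id]
  refine Triangle.isoMk _ _ (Iso.refl _) (Iso.refl _) ⟨_, _, oct_e1 f g, oct_e2 f g⟩ ?_ ?_ ?_
  · exact (Category.comp_id _).trans (Category.id_comp _).symm
  · exact e4.trans (Category.id_comp _).symm
  · exact (congrArg (_ ≫ ·) (CategoryTheory.Functor.map_id _ _)).trans (Category.comp_id _)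
end octa

instance triHtpy : IsTriangulated (HtpyCat K A) := IsTriangulated.mk' (by
  intro X₁ X₂ X₃ u v
  obtain ⟨f, rfl⟩ := hm_surj u
  obtain ⟨g, rfl⟩ := hm_surj v
  refine ⟨_, _, _, _, _, _, hm f, hm g, Iso.refl _, Iso.refl _, Iso.refl _, ?_, ?_, _, _,
    stdTri_dist f, _, _, stdTri_dist g, _, _, stdTri_dist (cc f g), ⟨?_⟩⟩
  · exact (Category.comp_id _).trans (Category.id_comp _).symm
  · exact (Category.comp_id _).trans (Category.id_comp _).symm
  · refine ⟨hm (octM1 f g), hm (octM3 f g), ?_, ?_, ?_, ?_, ?_⟩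
    · exact congrArg hm (CMap.ext (LinearMap.ext fun x => Prod.ext rfl rfl))
    · exact congrArg hm (CMap.ext (LinearMap.ext fun x => rfl))
    · exact congrArg hm (CMap.ext (LinearMap.ext fun x => Prod.ext rfl (map_zero f.toFun)))
    · exact congrArg hm (CMap.ext (LinearMap.ext fun x => rfl))
    · exact ⟨_, _, _, ⟨octIso f g⟩⟩)
end

section
set_option linter.unusedVariables false
variable {K : Type} [CommRing K] {A : DGAlgebra K}

lemma acyclic_of {M : DGMod K A} (h : ∀ (n : ℤ) (x : M.carrier), x ∈ M.deg n → M.d x = 0 →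
    ∃ y, M.d y = x) : IsAcyclic M := fun n x hx hd => by
  obtain ⟨y, hy⟩ := h n x hx hd
  refine ⟨M.p (n - 1) y, M.p_mem _ _, ?_⟩
  rw [← M.p_d, hy, sub_add_cancel, M.p_of_mem hx]

/-- acyclic modules in `H(A)` -/
def acy (A : DGAlgebra K) : ObjectProperty (HtpyCat K A) := fun X => IsAcyclic X.as

instance acyIso : (acy A).IsClosedUnderIsomorphisms where
  of_iso {X Y} e hX := by
    obtain ⟨f, hf⟩ := hm_surj e.hom
    obtain ⟨g, hg⟩ := hm_surj e.inv
    have h : hm (CategoryStruct.comp (obj := DGModCat K A) g f) = hm (𝟙 (Y.as : DGModCat K A)) := by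
      have := e.inv_hom_id
      rw [← hf, ← hg] at this
      exact this
    obtain ⟨σ, hσ, e⟩ := (hm_eq_iff _ _).1 h
    refine acyclic_of fun n y hy hdy => ?_
    obtain ⟨w, -, hw⟩ := hX n (g.toFun y) (g.deg hy) (by rw [← g.comm, hdy, map_zero])
    have e : f.toFun (g.toFun y) - y = Y.as.d (σ y) + σ (Y.as.d y) := LinearMap.congr_fun e y
    refine ⟨f.toFun w - σ y, ?_⟩
    rw [map_sub, ← f.comm, hw]
    rw [hdy, map_zero, add_zero] at e
    rw [← e]; abel

lemma acyclic_cone_iff {M N : DGMod K A} (f : CMap M N) : IsAcyclic (coneMod f) ↔ IsQis f := by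
  constructor
  · intro h
    refine ⟨fun n x hx hdx ⟨z, hz⟩ => ?_, fun n y hy hdy => ?_⟩
    · have hz' : f.toFun x = N.d (N.p (n - 1) z) := by
        rw [← N.p_d, ← hz, sub_add_cancel, N.p_of_mem (f.deg hx)]
      obtain ⟨⟨a, b⟩, -, hab⟩ := h (n - 1) (- N.p (n - 1) z, x)
        ⟨neg_mem (N.p_mem _ _), by simpa using hx⟩
        (Prod.ext (show N.d (- N.p (n - 1) z) + f.toFun x = 0 by rw [hz']; simp)
          (show - M.d x = 0 by rw [hdx, neg_zero]))
      refine ⟨-b, ?_⟩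
      have := congrArg Prod.snd hab
      rw [map_neg]; exact this.symm
    · obtain ⟨⟨a, b⟩, hm, hab⟩ := h n (y, 0) ⟨hy, zero_mem _⟩
        (Prod.ext (show N.d y + f.toFun 0 = 0 by rw [hdy]; simp) (show - M.d 0 = 0 by simp))
      have h1 : N.d a + f.toFun b = y := congrArg Prod.fst hab
      have h2 : - M.d b = 0 := congrArg Prod.snd hab
      refine ⟨b, a, by simpa using hm.2, neg_eq_zero.1 h2, ?_⟩
      rw [← h1, add_comm]
  · intro h
    refine acyclic_of fun k x hx hdx => ?_
    obtain ⟨n, m⟩ := x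
    have h1 : N.d n + f.toFun m = 0 := congrArg Prod.fst hdx
    have h2 : M.d m = 0 := neg_eq_zero.1 (congrArg Prod.snd hdx)
    obtain ⟨w, hw⟩ := h.1 _ m hx.2 h2 ⟨-n, by rw [map_neg]; exact eq_neg_of_add_eq_zero_right h1⟩
    have hw' : M.d (M.p k w) = m := by
      rw [← M.p_d, ← hw, M.p_of_mem hx.2]
    obtain ⟨x, z, hx', hdx', e⟩ := h.2 k (n + f.toFun (M.p k w)) (add_mem hx.1 (f.deg (M.p_mem _ _)))
      (by rw [map_add, ← f.comm, hw', h1])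
    refine ⟨(z, x - M.p k w), Prod.ext ?_ ?_⟩
    · change N.d z + f.toFun (x - M.p k w) = n
      rw [map_sub, eq_sub_of_add_eq e]; abel
    · change - M.d (x - M.p k w) = m
      rw [map_sub, hdx', hw']; simp

instance acyTri : (acy A).IsTriangulated where
  exists_zero := ⟨⟨zeroMod A⟩, by
    rw [Limits.IsZero.iff_id_eq_zero]
    exact congrArg hm (CMap.ext (LinearMap.ext fun x => rfl)), acyclic_of fun n x hx hd => ⟨0, rfl⟩⟩
  isStableUnderShiftBy n := ⟨fun X hX => acyclic_of (M := shiftMod X.as n) fun k x hx hdx => by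
    have hdx : sgn n • X.as.d x = 0 := hdx
    obtain ⟨y, -, hy⟩ := hX _ x hx (by
      rw [← sgn_smul_smul n (X.as.d x), hdx, smul_zero])
    exact ⟨sgn n • y, by
      change sgn n • X.as.d (sgn n • y) = x
      rw [map_zsmul, sgn_smul_smul, hy]⟩⟩
  toIsTriangulatedClosed₂ := ObjectProperty.IsTriangulatedClosed₂.mk' (fun T hT h1 h3 => by
    obtain ⟨M, N, f, ⟨e⟩⟩ := hT
    refine (acy A).prop_of_iso (Triangle.π₂.mapIso e).symm ?_
    have h1 : IsAcyclic M := (acy A).prop_of_iso (Triangle.π₁.mapIso e) h1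
    have h3 : IsAcyclic (coneMod f) := (acy A).prop_of_iso (Triangle.π₃.mapIso e) h3
    refine acyclic_of (M := N) fun n y hy hdy => ?_
    obtain ⟨x, z, hx, hdx, e⟩ := ((acyclic_cone_iff f).1 h3).2 n y hy hdy
    obtain ⟨w, -, hw⟩ := h1 n x hx hdx
    exact ⟨f.toFun w + z, by rw [map_add, ← f.comm, hw, e]⟩)

lemma acy_trW_hm {M N : DGMod K A} (f : CMap M N) : (acy A).trW (hm f) ↔ IsQis f := by
  rw [← acyclic_cone_iff]
  exact (acy A).trW_iff_of_distinguished (stdTri f) (stdTri_dist f)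

lemma qis_eq : qis K A = (acy A).trW := by
  ext X Y φ
  constructor
  · rintro ⟨f, rfl, hf⟩
    exact (acy_trW_hm f).2 hf
  · intro h
    obtain ⟨f, rfl⟩ := hm_surj φ
    exact ⟨f, rfl, (acy_trW_hm f).1 h⟩

instance qisL : (qis K A).HasLeftCalculusOfFractions := by rw [qis_eq]; infer_instance
instance qisR : (qis K A).HasRightCalculusOfFractions := by rw [qis_eq]; infer_instance
instance qisS : (qis K A).IsCompatibleWithShift ℤ := by rw [qis_eq]; infer_instance
instance qisT : (qis K A).IsCompatibleWithTriangulation := by rw [qis_eq]; infer_instance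

instance preDer : Preadditive (DerivedCat K A) := inferInstance
instance zoDer : Limits.HasZeroObject (DerivedCat K A) := inferInstance
instance hsDer : HasShift (DerivedCat K A) ℤ := inferInstance
instance addDer (n : ℤ) : (shiftFunctor (DerivedCat K A) n).Additive := inferInstance
instance ptDer : Pretriangulated (DerivedCat K A) := inferInstance
instance csDer : (derQ K A).CommShift ℤ := inferInstanceAs ((qis K A).Q.CommShift ℤ)
instance derLoc : (derQ K A).IsLocalization (acy A).trW := by
  rw [← qis_eq]; exact inferInstanceAs ((qis K A).Q.IsLocalization (qis K A))
instance derTri : (derQ K A).IsTriangulated := inferInstanceAs ((qis K A).Q.IsTriangulated)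

lemma distD_iff (T : Triangle (DerivedCat K A)) :
    T ∈ (distinguishedTriangles : Set (Triangle (DerivedCat K A))) ↔
      ∃ T' ∈ (distinguishedTriangles : Set (Triangle (HtpyCat K A))),
        Nonempty (T ≅ (derQ K A).mapTriangle.obj T') :=
  ⟨fun ⟨T', e, h⟩ => ⟨T', h, ⟨e⟩⟩, fun ⟨T', h, ⟨e⟩⟩ => ⟨T', e, h⟩⟩

lemma htpyProj_iff (P : DGMod K A) : IsHtpyProj P ↔ (acy A).leftOrthogonal ⟨P⟩ := by
  constructor
  · intro h Y φ hY
    obtain ⟨f, rfl⟩ := hm_surj φ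
    exact (hm_eq_zero_iff f).2 (h _ hY f)
  · intro h N hN f
    exact (hm_eq_zero_iff f).1 (h (Y := ⟨N⟩) (hm f) hN)

lemma htpyInj_iff (P : DGMod K A) : IsHtpyInj P ↔ (acy A).rightOrthogonal ⟨P⟩ := by
  constructor
  · intro h Y φ hY
    obtain ⟨f, rfl⟩ := hm_surj φ
    exact (hm_eq_zero_iff f).2 (h _ hY f)
  · intro h N hN f
    exact (hm_eq_zero_iff f).1 (h (X := ⟨N⟩) (hm f) hN)
end

section
set_option linter.unusedVariables false
set_option linter.unusedSectionVars false

section abstractTele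
variable {C : Type*} [Category C] [Preadditive C] [Limits.HasZeroObject C] [HasShift C ℤ]
  [∀ n : ℤ, (shiftFunctor C n).Additive] [Pretriangulated C]
  (P : ObjectProperty C) [P.IsStableUnderShift ℤ]

lemma leftOrth_of_bij (T : Triangle C) (hT : T ∈ distTriang C)
    (hinj : ∀ N, P N → ∀ k : T.obj₃ ⟶ N, T.mor₂ ≫ k = 0 → k = 0)
    (hsurj : ∀ N, P N → ∀ k : T.obj₂ ⟶ N, ∃ l, T.mor₂ ≫ l = k) :
    P.leftOrthogonal T.obj₁ := by
  intro N g hN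
  have h1 : T.mor₃ ≫ g⟦(1 : ℤ)⟧' = 0 :=
    hinj _ (P.le_shift 1 _ hN) _ (by
      rw [← Category.assoc, comp_distTriang_mor_zero₂₃ _ hT, Limits.zero_comp])
  obtain ⟨h, hh⟩ := Triangle.yoneda_exact₃ T.rotate (rot_of_distTriang _ hT) (g⟦(1 : ℤ)⟧') h1
  obtain ⟨h', rfl⟩ := (shiftFunctor C (1 : ℤ)).map_surjective h
  obtain ⟨k, rfl⟩ := hsurj _ hN h'
  apply (shiftFunctor C (1 : ℤ)).map_injective
  rw [Functor.map_zero]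
  have h2 : (T.mor₁)⟦(1 : ℤ)⟧' ≫ (T.mor₂ ≫ k)⟦(1 : ℤ)⟧' = 0 := by
    rw [← Functor.map_comp, ← Category.assoc, comp_distTriang_mor_zero₁₂ _ hT, Limits.zero_comp,
      Functor.map_zero]
  exact hh.trans ((Preadditive.neg_comp _ _).trans (neg_eq_zero.2 h2))

lemma rightOrth_of_bij (T : Triangle C) (hT : T ∈ distTriang C)
    (hinj : ∀ N, P N → ∀ k : N ⟶ T.obj₁, k ≫ T.mor₁ = 0 → k = 0)
    (hsurj : ∀ N, P N → ∀ k : N ⟶ T.obj₂, ∃ l, l ≫ T.mor₁ = k) :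
    P.rightOrthogonal T.obj₃ := by
  intro N g hN
  have h1 : g ≫ T.mor₃ = 0 := by
    obtain ⟨b, hb⟩ := (shiftFunctor C (1 : ℤ)).map_surjective ((shiftNegShift N (1 : ℤ)).hom ≫ g ≫ T.mor₃)
    have hb0 : b = 0 := hinj _ (P.le_shift (-1) _ hN) _ (by
      apply (shiftFunctor C (1 : ℤ)).map_injective
      rw [Functor.map_comp, hb, Category.assoc, Category.assoc, comp_distTriang_mor_zero₃₁ _ hT,
        Functor.map_zero, Limits.comp_zero, Limits.comp_zero])
    rw [hb0, Functor.map_zero] at hb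
    rw [← cancel_epi (shiftNegShift N (1 : ℤ)).hom, ← hb, Limits.comp_zero]
  obtain ⟨l, rfl⟩ := Triangle.coyoneda_exact₃ T hT g h1
  obtain ⟨k, rfl⟩ := hsurj _ hN l
  rw [Category.assoc, comp_distTriang_mor_zero₁₂ _ hT, Limits.comp_zero]

section left
lemma tele_left_surj (X : ℕ → C) (u : ∀ n, X n ⟶ X (n + 1)) {S : C} (ι : ∀ n, X n ⟶ S)
    (hlift : ∀ (N : C) (g : ∀ n, X n ⟶ N), ∃ h : S ⟶ N, ∀ n, ι n ≫ h = g n)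
  (hext : ∀ (N : C) (h : S ⟶ N), (∀ n, ι n ≫ h = 0) → h = 0)
  (φ : S ⟶ S) (hφ : ∀ n, ι n ≫ φ = ι n - u n ≫ ι (n + 1))
    {T : C} (a : S ⟶ T) (b : T ⟶ S⟦(1 : ℤ)⟧) (hT : Triangle.mk φ a b ∈ distTriang C)
    (hsurj : ∀ n N, P N → ∀ k : X n ⟶ N, ∃ l, u n ≫ l = k)
    (N : C) (hN : P N) (k : X 0 ⟶ N) : ∃ l, (ι 0 ≫ a) ≫ l = k := by
  let h : ∀ n, X n ⟶ N := fun n => Nat.rec (motive := fun n => X n ⟶ N) k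
    (fun n g => (hsurj n N hN g).choose) n
  have hh : ∀ n, u n ≫ h (n + 1) = h n := fun n => (hsurj n N hN (h n)).choose_spec
  obtain ⟨f, hf⟩ := hlift N h
  obtain ⟨l, hl⟩ : ∃ l : T ⟶ N, f = a ≫ l := Triangle.yoneda_exact₂ _ hT f (hext _ _ fun n => by
    change ι n ≫ φ ≫ f = 0
    rw [← Category.assoc, hφ, Preadditive.sub_comp, Category.assoc, hf, hf, hh, sub_self])
  exact ⟨l, by rw [Category.assoc, ← hl, hf]; rfl⟩

lemma tele_left_solve (X : ℕ → C) (u : ∀ n, X n ⟶ X (n + 1)) {S : C} (ι : ∀ n, X n ⟶ S)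
    (hlift : ∀ (N : C) (g : ∀ n, X n ⟶ N), ∃ h : S ⟶ N, ∀ n, ι n ≫ h = g n)
  (hext : ∀ (N : C) (h : S ⟶ N), (∀ n, ι n ≫ h = 0) → h = 0)
  (φ : S ⟶ S) (hφ : ∀ n, ι n ≫ φ = ι n - u n ≫ ι (n + 1))
    (hsurj : ∀ n N, P N → ∀ k : X n ⟶ N, ∃ l, u n ≫ l = k)
    (N : C) (hN : P N) (l : S ⟶ N) : ∃ l', φ ≫ l' = l := by
  let h : ∀ n, X n ⟶ N := fun n => Nat.rec (motive := fun n => X n ⟶ N) 0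
    (fun n g => (hsurj n N hN (g - ι n ≫ l)).choose) n
  have hh : ∀ n, u n ≫ h (n + 1) = h n - ι n ≫ l := fun n =>
    (hsurj n N hN (h n - ι n ≫ l)).choose_spec
  obtain ⟨f, hf⟩ := hlift N h
  refine ⟨f, sub_eq_zero.1 (hext _ _ fun n => ?_)⟩
  rw [Preadditive.comp_sub, ← Category.assoc, hφ, Preadditive.sub_comp, Category.assoc, hf, hf, hh]
  abel

lemma tele_left_inj (X : ℕ → C) (u : ∀ n, X n ⟶ X (n + 1)) {S : C} (ι : ∀ n, X n ⟶ S)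
    (hlift : ∀ (N : C) (g : ∀ n, X n ⟶ N), ∃ h : S ⟶ N, ∀ n, ι n ≫ h = g n)
  (hext : ∀ (N : C) (h : S ⟶ N), (∀ n, ι n ≫ h = 0) → h = 0)
  (φ : S ⟶ S) (hφ : ∀ n, ι n ≫ φ = ι n - u n ≫ ι (n + 1))
    {T : C} (a : S ⟶ T) (b : T ⟶ S⟦(1 : ℤ)⟧) (hT : Triangle.mk φ a b ∈ distTriang C)
    (hinj : ∀ n N, P N → ∀ k : X (n + 1) ⟶ N, u n ≫ k = 0 → k = 0)
    (hsurj : ∀ n N, P N → ∀ k : X n ⟶ N, ∃ l, u n ≫ l = k)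
    (N : C) (hN : P N) (k : T ⟶ N) (hk : (ι 0 ≫ a) ≫ k = 0) : k = 0 := by
  have h0 : ∀ n, ι n ≫ a ≫ k = 0 := by
    intro n
    induction n with
    | zero => rw [← Category.assoc]; exact hk
    | succ n ih =>
      apply hinj n N hN
      have h1 : φ ≫ a = 0 := comp_distTriang_mor_zero₁₂ _ hT
      have h2 : (ι n ≫ φ) ≫ a ≫ k = 0 := by
        rw [Category.assoc, reassoc_of% h1, Limits.zero_comp, Limits.comp_zero]
      rw [hφ, Preadditive.sub_comp, ih, zero_sub, neg_eq_zero, Category.assoc] at h2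
      exact h2
  obtain ⟨l, rfl⟩ : ∃ l : S⟦(1:ℤ)⟧ ⟶ N, k = b ≫ l := Triangle.yoneda_exact₃ _ hT k (hext _ _ h0)
  obtain ⟨m, hm⟩ := (shiftFunctor C (1 : ℤ)).map_surjective (l ≫ (shiftNegShift N (1 : ℤ)).inv)
  obtain ⟨m', rfl⟩ := tele_left_solve P X u ι hlift hext φ hφ hsurj _ (P.le_shift (-1) _ hN) m
  have hl : l = (φ ≫ m')⟦(1 : ℤ)⟧' ≫ (shiftNegShift N (1 : ℤ)).hom := by
    rw [hm, Category.assoc, Iso.inv_hom_id, Category.comp_id]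
  have h3 : b ≫ φ⟦(1 : ℤ)⟧' = 0 := comp_distTriang_mor_zero₃₁ _ hT
  rw [hl, Functor.map_comp, Category.assoc, reassoc_of% h3, Limits.zero_comp]
end left

section right
lemma tele_right_surj (X : ℕ → C) (u : ∀ n, X (n + 1) ⟶ X n) {S : C} (π : ∀ n, S ⟶ X n)
    (hlift : ∀ (N : C) (g : ∀ n, N ⟶ X n), ∃ h : N ⟶ S, ∀ n, h ≫ π n = g n)
  (hext : ∀ (N : C) (h : N ⟶ S), (∀ n, h ≫ π n = 0) → h = 0)
  (φ : S ⟶ S) (hφ : ∀ n, φ ≫ π n = π n - π (n + 1) ≫ u n)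
    {T : C} (a : T ⟶ S) (b : S ⟶ T⟦(1 : ℤ)⟧) (hT : Triangle.mk a φ b ∈ distTriang C)
    (hsurj : ∀ n N, P N → ∀ k : N ⟶ X n, ∃ l, l ≫ u n = k)
    (N : C) (hN : P N) (k : N ⟶ X 0) : ∃ l, l ≫ (a ≫ π 0) = k := by
  let h : ∀ n, N ⟶ X n := fun n => Nat.rec (motive := fun n => N ⟶ X n) k
    (fun n g => (hsurj n N hN g).choose) n
  have hh : ∀ n, h (n + 1) ≫ u n = h n := fun n => (hsurj n N hN (h n)).choose_spec
  obtain ⟨f, hf⟩ := hlift N h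
  obtain ⟨l, hl⟩ : ∃ l : N ⟶ T, f = l ≫ a := Triangle.coyoneda_exact₂ _ hT f (hext _ _ fun n => by
    change (f ≫ φ) ≫ π n = 0
    rw [Category.assoc, hφ, Preadditive.comp_sub, ← Category.assoc, hf, hf, hh, sub_self])
  exact ⟨l, by rw [← Category.assoc, ← hl, hf]; rfl⟩

lemma tele_right_solve (X : ℕ → C) (u : ∀ n, X (n + 1) ⟶ X n) {S : C} (π : ∀ n, S ⟶ X n)
    (hlift : ∀ (N : C) (g : ∀ n, N ⟶ X n), ∃ h : N ⟶ S, ∀ n, h ≫ π n = g n)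
  (hext : ∀ (N : C) (h : N ⟶ S), (∀ n, h ≫ π n = 0) → h = 0)
  (φ : S ⟶ S) (hφ : ∀ n, φ ≫ π n = π n - π (n + 1) ≫ u n)
    (hsurj : ∀ n N, P N → ∀ k : N ⟶ X n, ∃ l, l ≫ u n = k)
    (N : C) (hN : P N) (l : N ⟶ S) : ∃ l', l' ≫ φ = l := by
  let h : ∀ n, N ⟶ X n := fun n => Nat.rec (motive := fun n => N ⟶ X n) 0
    (fun n g => (hsurj n N hN (g - l ≫ π n)).choose) n
  have hh : ∀ n, h (n + 1) ≫ u n = h n - l ≫ π n := fun n =>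
    (hsurj n N hN (h n - l ≫ π n)).choose_spec
  obtain ⟨f, hf⟩ := hlift N h
  refine ⟨f, sub_eq_zero.1 (hext _ _ fun n => ?_)⟩
  rw [Preadditive.sub_comp, Category.assoc, hφ, Preadditive.comp_sub, ← Category.assoc, hf, hf, hh]
  abel

lemma tele_right_inj (X : ℕ → C) (u : ∀ n, X (n + 1) ⟶ X n) {S : C} (π : ∀ n, S ⟶ X n)
    (hlift : ∀ (N : C) (g : ∀ n, N ⟶ X n), ∃ h : N ⟶ S, ∀ n, h ≫ π n = g n)
  (hext : ∀ (N : C) (h : N ⟶ S), (∀ n, h ≫ π n = 0) → h = 0)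
  (φ : S ⟶ S) (hφ : ∀ n, φ ≫ π n = π n - π (n + 1) ≫ u n)
    {T : C} (a : T ⟶ S) (b : S ⟶ T⟦(1 : ℤ)⟧) (hT : Triangle.mk a φ b ∈ distTriang C)
    (hinj : ∀ n N, P N → ∀ k : N ⟶ X (n + 1), k ≫ u n = 0 → k = 0)
    (hsurj : ∀ n N, P N → ∀ k : N ⟶ X n, ∃ l, l ≫ u n = k)
    (N : C) (hN : P N) (k : N ⟶ T) (hk : k ≫ (a ≫ π 0) = 0) : k = 0 := by
  have h0 : ∀ n, (k ≫ a) ≫ π n = 0 := by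
    intro n
    induction n with
    | zero => rw [Category.assoc]; exact hk
    | succ n ih =>
      apply hinj n N hN
      have h1 : a ≫ φ = 0 := comp_distTriang_mor_zero₁₂ _ hT
      have h2 : (k ≫ a) ≫ φ ≫ π n = 0 := by
        rw [Category.assoc, reassoc_of% h1, Limits.zero_comp, Limits.comp_zero]
      rw [hφ, Preadditive.comp_sub, ih, zero_sub, neg_eq_zero, ← Category.assoc] at h2
      exact h2
  have h1 : k ≫ a = 0 := hext _ _ h0
  obtain ⟨l, hl⟩ : ∃ l : N⟦(1:ℤ)⟧ ⟶ S, k⟦(1:ℤ)⟧' = l ≫ b := Triangle.coyoneda_exact₁ _ hT (k⟦(1 : ℤ)⟧') (by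
    change k⟦(1 : ℤ)⟧' ≫ a⟦(1 : ℤ)⟧' = 0
    rw [← Functor.map_comp, h1, Functor.map_zero])
  obtain ⟨m, rfl⟩ := tele_right_solve P X u π hlift hext φ hφ hsurj _ (P.le_shift 1 _ hN) l
  have h3 : φ ≫ b = 0 := comp_distTriang_mor_zero₂₃ _ hT
  apply (shiftFunctor C (1 : ℤ)).map_injective
  rw [hl, Functor.map_zero]
  rw [Category.assoc, h3, Limits.comp_zero]
end right
end abstractTele
end

section
set_option linter.unusedVariables false
variable {K : Type} [CommRing K] {A : DGAlgebra K}

/-- composition of chain maps -/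
@[reducible] def ccmp {M N P : DGMod K A} (f : CMap M N) (g : CMap N P) : CMap M P :=
  CategoryStruct.comp (obj := DGModCat K A) f g
/-- identity chain map -/
@[reducible] def cid (M : DGMod K A) : CMap M M := 𝟙 (M : DGModCat K A)

lemma ghost_comp_right {M N P : DGMod K A} {f : CMap M N} (hf : IsGhost f) (g : CMap N P) :
    IsGhost (ccmp f g) := fun n x hx hd => by
  obtain ⟨z, hz⟩ := hf n x hx hd
  exact ⟨g.toFun z, by rw [← g.comm, ← hz]; rfl⟩

lemma ghost_comp_left {M N P : DGMod K A} (f : CMap M N) {g : CMap N P} (hg : IsGhost g) :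
    IsGhost (ccmp f g) := fun n x hx hd =>
  hg n (f.toFun x) (f.deg hx) (by rw [← f.comm, hd, map_zero])

lemma ghost_qis {M : DGMod K A} {s : CMap M M} (hs : IsGhost s) : IsQis (cid M - s) := by
  refine ⟨fun n x hx hd ⟨z, hz⟩ => ?_, fun n y hy hd => ?_⟩
  · obtain ⟨w, hw⟩ := hs n x hx hd
    have hz : x - s.toFun x = M.d z := hz
    exact ⟨z + w, by rw [map_add, ← hz, ← hw]; abel⟩
  · obtain ⟨w, hw⟩ := hs n y hy hd
    refine ⟨y, w, hy, hd, ?_⟩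
    change y = y - s.toFun y + M.d w
    rw [hw]; abel

lemma coprodDesc_ghost {J : Type} {X : J → DGMod K A} {N : DGMod K A} (f : ∀ j, CMap (X j) N)
    (hf : ∀ j, IsGhost (f j)) : IsGhost (coprodDesc f) := by
  classical
  intro n x hx hd
  have hd' : ∀ j, (X j).d (x j) = 0 := fun j => DFunLike.congr_fun hd j
  choose z hz using fun j => hf j n (x j) (hx j) (hd' j)
  refine ⟨∑ j ∈ x.support, z j, ?_⟩
  rw [map_sum]
  change (DFinsupp.lsum (S := ℕ) fun j => (f j).toFun) x = _
  rw [DFinsupp.lsum_apply_apply, DFinsupp.sumAddHom_apply, DFinsupp.sum]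
  exact Finset.sum_congr rfl fun j _ => hz j

lemma prodLift_ghost {J : Type} {X : J → DGMod K A} {N : DGMod K A} (f : ∀ j, CMap N (X j))
    (hf : ∀ j, IsGhost (f j)) : IsGhost (prodLift f) := by
  intro n x hx hd
  choose z hz using fun j => hf j n x hx hd
  obtain ⟨F, hF⟩ := N.e_sum x
  let v : (prodPre X).carrier := fun j => (X j).p (n - 1) (z j)
  have hv : v ∈ (prodPre X).deg (n - 1) := fun j _ => (X j).p_mem _ _
  let w : (prodPre X).carrier := ∑ i ∈ F, (prodPre X).act v (A.e i)
  have hw : w ∈ (prodPre X).coreSub := by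
    refine ⟨Submodule.mem_iSup_of_mem (n - 1) (sum_mem fun i _ => ?_),
      sum_mem fun i _ => Submodule.mem_iSup_of_mem i ⟨v, trivial, rfl⟩⟩
    have := (prodPre X).act_deg hv (A.e_deg i)
    rwa [add_zero] at this
  refine ⟨⟨w, hw⟩, prod_ext fun j => ?_⟩
  rw [(prodPr X j).comm]
  change (f j).toFun x = (X j).d (w j)
  have e : w j = ∑ i ∈ F, (X j).act ((X j).p (n - 1) (z j)) (A.e i) := by
    simp only [w, Finset.sum_apply]; rfl
  rw [e, map_sum]
  conv_lhs => rw [← hF, map_sum]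
  refine Finset.sum_congr rfl fun i _ => ?_
  rw [(X j).d_act_e, ← (X j).p_d, ← hz, (f j).mem.2, sub_add_cancel, (X j).p_of_mem ((f j).deg hx)]

/-- the left tower -/
def lseq (M : DGMod K A) : ℕ → DGMod K A
  | 0 => M
  | n + 1 => coneMod (left_ghost_step (lseq M n)).choose_spec.choose

/-- the transition maps of the left tower -/
def ltr (M : DGMod K A) (n : ℕ) : CMap (lseq M n) (lseq M (n + 1)) :=
  coneIn (left_ghost_step (lseq M n)).choose_spec.choose

lemma ltr_ghost (M : DGMod K A) (n : ℕ) : IsGhost (ltr M n) :=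
  (left_ghost_step (lseq M n)).choose_spec.choose_spec.2

lemma ltr_bij (M : DGMod K A) (n : ℕ) (N : HtpyCat K A) (hN : acy A N) :
    Function.Bijective (fun k : (⟨lseq M (n + 1)⟩ : HtpyCat K A) ⟶ N => hm (ltr M n) ≫ k) := by
  have h := (left_ghost_step (lseq M n)).choose_spec.choose_spec.1
  have hW : (acy A).leftOrthogonal.trW (hm (ltr M n)) :=
    ObjectProperty.trW.mk' _ (stdTri_dist (left_ghost_step (lseq M n)).choose_spec.choose)
      ((htpyProj_iff _).1 h)
  have hN' : (acy A).leftOrthogonal.trW.isLocal N := by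
    rw [ObjectProperty.isLocal_trW]
    intro X f hX
    exact hX f hN
  exact hN' _ hW

/-- the desuspended cone map -/
def fibMap {M I : DGMod K A} (f : CMap M I) : CMap (shiftMod (coneMod f) (-1)) M where
  toFun := LinearMap.snd K _ _
  mem := ⟨fun k x hx => by
    have := hx.2
    rwa [show k + -1 + 1 = k + 0 by ring] at this, fun x a => rfl⟩
  comm x := by
    change (sgn (-1) • (coneMod f).d x).2 = M.d x.2
    rw [sgn_neg_one]
    simp

/-- unshift -/
def unsh (M : DGMod K A) : CMap (shiftMod (shiftMod M 1) (-1)) M where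
  toFun := LinearMap.id
  mem := ⟨fun k x hx => by
    have hx : x ∈ M.deg (k + -1 + 1) := hx
    rwa [show k + -1 + 1 = k + 0 by ring] at hx, fun x a => rfl⟩
  comm x := by
    change sgn (-1) • sgn 1 • M.d x = M.d x
    simp [sgn_neg_one, sgn_one]

/-- unshift -/
def unshInv (M : DGMod K A) : CMap M (shiftMod (shiftMod M 1) (-1)) where
  toFun := LinearMap.id
  mem := ⟨fun k x hx => by
    change x ∈ M.deg (k + 0 + -1 + 1)
    rwa [show k + 0 + -1 + 1 = k by ring], fun x a => rfl⟩
  comm x := by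
    change M.d x = sgn (-1) • sgn 1 • M.d x
    simp [sgn_neg_one, sgn_one]

instance unsh_iso (M : DGMod K A) : IsIso (hm (unsh M)) :=
  ⟨hm (unshInv M), rfl, rfl⟩

/-- the right tower -/
def rseq (M : DGMod K A) : ℕ → DGMod K A
  | 0 => M
  | n + 1 => shiftMod (coneMod (right_ghost_step (rseq M n)).choose_spec.choose) (-1)

/-- the transition maps of the right tower -/
def rtr (M : DGMod K A) (n : ℕ) : CMap (rseq M (n + 1)) (rseq M n) :=
  fibMap (right_ghost_step (rseq M n)).choose_spec.choose

lemma fib_ghost {M I : DGMod K A} (f : CMap M I) (hf : IsGhost (coneOut f)) :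
    IsGhost (fibMap f) := by
  intro n x hx hd
  have hd : sgn (-1) • (coneMod f).d x = 0 := hd
  obtain ⟨z, hz⟩ := hf _ x hx (by
    rw [← sgn_smul_smul (-1) ((coneMod f).d x), hd, smul_zero])
  have hz : x.2 = sgn 1 • M.d z := hz
  exact ⟨sgn 1 • z, by rw [map_zsmul]; exact hz⟩

lemma rtr_ghost (M : DGMod K A) (n : ℕ) : IsGhost (rtr M n) :=
  fib_ghost _ (right_ghost_step (rseq M n)).choose_spec.choose_spec.2

lemma rtr_bij (M : DGMod K A) (n : ℕ) (N : HtpyCat K A) (hN : acy A N) :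
    Function.Bijective (fun k : N ⟶ (⟨rseq M (n + 1)⟩ : HtpyCat K A) => k ≫ hm (rtr M n)) := by
  have h := (right_ghost_step (rseq M n)).choose_spec.choose_spec.1
  set f := (right_ghost_step (rseq M n)).choose_spec.choose with hf
  have hW : (acy A).rightOrthogonal.trW (hm (coneOut f)) :=
    ObjectProperty.trW.mk' _ (rot_of_distTriang _ (stdTri_dist f))
      ((htpyInj_iff _).1 h)
  have hW' : (acy A).rightOrthogonal.trW (hm (rtr M n)) := by
    have e : hm (rtr M n) = (hm (coneOut f))⟦(-1 : ℤ)⟧' ≫ hm (unsh (rseq M n)) := rfl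
    rw [e]
    exact (MorphismProperty.cancel_right_of_respectsIso _ _ _).2 (hW.shift (-1))
  have hN' : (acy A).rightOrthogonal.trW.isColocal N := by
    rw [ObjectProperty.isColocal_trW]
    intro X f hX
    exact hX f hN
  exact hN' _ hW'

theorem left_resolution (M : HtpyCat K A) : ∃ (P T : HtpyCat K A) (a : P ⟶ M) (b : M ⟶ T)
    (c : T ⟶ P⟦(1 : ℤ)⟧), Triangle.mk a b c ∈ distTriang (HtpyCat K A) ∧
    (acy A).leftOrthogonal P ∧ acy A T := by
  obtain ⟨M⟩ := M
  let X := lseq M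
  let s : CMap (coprodMod X) (coprodMod X) :=
    coprodDesc fun n => ccmp (ltr M n) (coprodIn X (n + 1))
  have hs : IsGhost s := coprodDesc_ghost _ fun n => ghost_comp_right (ltr_ghost M n) _
  let φ : CMap (coprodMod X) (coprodMod X) := cid _ - s
  have hT : acy A ⟨coneMod φ⟩ := (acyclic_cone_iff φ).2 (ghost_qis hs)
  have hin : ∀ {N : DGMod K A} (f : ∀ n, CMap (X n) N) (n : ℕ),
      ccmp (coprodIn X n) (coprodDesc f) = f n := fun f n => CMap.ext (coprod_lift_in _ n)
  have hlift : ∀ (N : HtpyCat K A) (g : ∀ n, (⟨X n⟩ : HtpyCat K A) ⟶ N),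
      ∃ h : (⟨coprodMod X⟩ : HtpyCat K A) ⟶ N, ∀ n, hm (coprodIn X n) ≫ h = g n := by
    intro N g
    choose g' hg' using fun n => hm_surj (g n)
    exact ⟨hm (coprodDesc g'), fun n => (congrArg hm (hin g' n)).trans (hg' n)⟩
  have hext : ∀ (N : HtpyCat K A) (h : (⟨coprodMod X⟩ : HtpyCat K A) ⟶ N),
      (∀ n, hm (coprodIn X n) ≫ h = 0) → h = 0 := by
    intro N h hh
    obtain ⟨h, rfl⟩ := hm_surj h
    exact (hm_eq_zero_iff h).2 (coprod_nullHomotopic h fun j =>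
      (hm_eq_zero_iff (ccmp (coprodIn X j) h)).1 (hh j))
  have hφ : ∀ n, hm (coprodIn X n) ≫ hm φ =
      hm (coprodIn X n) - hm (ltr M n) ≫ hm (coprodIn X (n + 1)) := by
    intro n
    rw [hm_sub, Preadditive.comp_sub]
    congr 1
    exact congrArg hm (hin _ n)
  have hinj := fun n N (hN : acy A N) (k : (⟨X (n + 1)⟩ : HtpyCat K A) ⟶ N)
    (hk : hm (ltr M n) ≫ k = 0) => (ltr_bij M n N hN).1 (hk.trans Limits.comp_zero.symm)
  have hsurj := fun n N (hN : acy A N) (k : (⟨X n⟩ : HtpyCat K A) ⟶ N) =>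
    (ltr_bij M n N hN).2 k
  obtain ⟨P, a, c, hd⟩ := distinguished_cocone_triangle₁ (hm (coprodIn X 0) ≫ hm (coneIn φ))
  refine ⟨P, ⟨coneMod φ⟩, a, _, c, hd, ?_, hT⟩
  exact leftOrth_of_bij (acy A) _ hd
    (tele_left_inj (acy A) (fun n => ⟨X n⟩) (fun n => hm (ltr M n)) (fun n => hm (coprodIn X n))
      hlift hext (hm φ) hφ (hm (coneIn φ)) (hm (coneOut φ)) (stdTri_dist φ) hinj hsurj)
    (tele_left_surj (acy A) (fun n => ⟨X n⟩) (fun n => hm (ltr M n)) (fun n => hm (coprodIn X n))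
      hlift hext (hm φ) hφ (hm (coneIn φ)) (hm (coneOut φ)) (stdTri_dist φ) hsurj)

theorem right_resolution (M : HtpyCat K A) : ∃ (T I : HtpyCat K A) (a : T ⟶ M) (b : M ⟶ I)
    (c : I ⟶ T⟦(1 : ℤ)⟧), Triangle.mk a b c ∈ distTriang (HtpyCat K A) ∧
    acy A T ∧ (acy A).rightOrthogonal I := by
  obtain ⟨M⟩ := M
  let X := rseq M
  let s : CMap (prodMod X) (prodMod X) :=
    prodLift fun n => ccmp (prodPr X (n + 1)) (rtr M n)
  have hs : IsGhost s := prodLift_ghost _ fun n => ghost_comp_left _ (rtr_ghost M n)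
  let φ : CMap (prodMod X) (prodMod X) := cid _ - s
  have hT : acy A ⟨coneMod φ⟩ := (acyclic_cone_iff φ).2 (ghost_qis hs)
  have hin : ∀ {N : DGMod K A} (f : ∀ n, CMap N (X n)) (n : ℕ),
      ccmp (prodLift f) (prodPr X n) = f n := fun f n => rfl
  have hlift : ∀ (N : HtpyCat K A) (g : ∀ n, N ⟶ (⟨X n⟩ : HtpyCat K A)),
      ∃ h : N ⟶ (⟨prodMod X⟩ : HtpyCat K A), ∀ n, h ≫ hm (prodPr X n) = g n := by
    intro N g
    choose g' hg' using fun n => hm_surj (g n)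
    exact ⟨hm (prodLift g'), fun n => (congrArg hm (hin g' n)).trans (hg' n)⟩
  have hext : ∀ (N : HtpyCat K A) (h : N ⟶ (⟨prodMod X⟩ : HtpyCat K A)),
      (∀ n, h ≫ hm (prodPr X n) = 0) → h = 0 := by
    intro N h hh
    obtain ⟨h, rfl⟩ := hm_surj h
    exact (hm_eq_zero_iff h).2 (prod_nullHomotopic h fun j =>
      (hm_eq_zero_iff (ccmp h (prodPr X j))).1 (hh j))
  have hφ : ∀ n, hm φ ≫ hm (prodPr X n) =
      hm (prodPr X n) - hm (prodPr X (n + 1)) ≫ hm (rtr M n) := by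
    intro n
    rw [hm_sub, Preadditive.sub_comp]
    congr 1
  have hinj := fun n N (hN : acy A N) (k : N ⟶ (⟨X (n + 1)⟩ : HtpyCat K A))
    (hk : k ≫ hm (rtr M n) = 0) => (rtr_bij M n N hN).1 (hk.trans Limits.zero_comp.symm)
  have hsurj := fun n N (hN : acy A N) (k : N ⟶ (⟨X n⟩ : HtpyCat K A)) =>
    (rtr_bij M n N hN).2 k
  have hd' := inv_rot_of_distTriang _ (stdTri_dist φ)
  let a : (⟨coneMod φ⟩ : HtpyCat K A)⟦(-1 : ℤ)⟧ ⟶ ⟨prodMod X⟩ := (stdTri φ).invRotate.mor₁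
  let b : (⟨prodMod X⟩ : HtpyCat K A) ⟶ (⟨coneMod φ⟩ : HtpyCat K A)⟦(-1 : ℤ)⟧⟦(1 : ℤ)⟧ :=
    (stdTri φ).invRotate.mor₃
  have hd' : Triangle.mk a (hm φ) b ∈ distTriang (HtpyCat K A) := hd'
  obtain ⟨I, p, c, hd⟩ := distinguished_cocone_triangle (a ≫ hm (prodPr X 0))
  refine ⟨_, I, _, p, c, hd, (acy A).le_shift (-1) _ hT, ?_⟩
  exact rightOrth_of_bij (acy A) _ hd
    (tele_right_inj (acy A) (fun n => ⟨X n⟩) (fun n => hm (rtr M n)) (fun n => hm (prodPr X n))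
      hlift hext (hm φ) hφ a b hd' hinj hsurj)
    (tele_right_surj (acy A) (fun n => ⟨X n⟩) (fun n => hm (rtr M n)) (fun n => hm (prodPr X n))
      hlift hext (hm φ) hφ a b hd' hsurj)
end

section
set_option linter.unusedVariables false
variable {K : Type} [CommRing K] {A : DGAlgebra K}

instance derEss : (derQ K A).EssSurj := Localization.essSurj (derQ K A) (acy A).trW

lemma exists_left (Y : DerivedCat K A) : ∃ P : HtpyCat K A, (acy A).leftOrthogonal P ∧
    Nonempty (Y ≅ (derQ K A).obj P) := by
  obtain ⟨P, T, a, b, c, hd, hP, hT⟩ := left_resolution ((derQ K A).objPreimage Y)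
  have hW : (acy A).trW a := ObjectProperty.trW.mk (acy A) hd hT
  have := Localization.inverts (derQ K A) (acy A).trW a hW
  exact ⟨P, hP, ⟨((derQ K A).objObjPreimageIso Y).symm ≪≫ (asIso ((derQ K A).map a)).symm⟩⟩

lemma exists_right (Y : DerivedCat K A) : ∃ I : HtpyCat K A, (acy A).rightOrthogonal I ∧
    Nonempty ((derQ K A).obj I ≅ Y) := by
  obtain ⟨T, I, a, b, c, hd, hT, hI⟩ := right_resolution ((derQ K A).objPreimage Y)
  have hW : (acy A).trW b := ObjectProperty.trW.mk' (acy A) hd hT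
  have := Localization.inverts (derQ K A) (acy A).trW b hW
  exact ⟨I, hI, ⟨(asIso ((derQ K A).map b)).symm ≪≫ (derQ K A).objObjPreimageIso Y⟩⟩

/-- projective resolution -/
def pObj (Y : DerivedCat K A) : HtpyCat K A := (exists_left Y).choose
lemma pObj_orth (Y : DerivedCat K A) : (acy A).leftOrthogonal (pObj Y) :=
  (exists_left Y).choose_spec.1
/-- the comparison -/
def pIso (Y : DerivedCat K A) : Y ≅ (derQ K A).obj (pObj Y) := (exists_left Y).choose_spec.2.some
/-- injective resolution -/
def iObj (Y : DerivedCat K A) : HtpyCat K A := (exists_right Y).choose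
lemma iObj_orth (Y : DerivedCat K A) : (acy A).rightOrthogonal (iObj Y) :=
  (exists_right Y).choose_spec.1
/-- the comparison -/
def iIso (Y : DerivedCat K A) : (derQ K A).obj (iObj Y) ≅ Y := (exists_right Y).choose_spec.2.some

/-- hom bijection -/
def pEquiv (Y : DerivedCat K A) (N : HtpyCat K A) : (pObj Y ⟶ N) ≃ (Y ⟶ (derQ K A).obj N) :=
  (Equiv.ofBijective _ ((pObj_orth Y).map_bijective_of_isTriangulated (derQ K A) N)).trans
    (pIso Y).symm.homFromEquiv

lemma pEquiv_apply (Y : DerivedCat K A) (N : HtpyCat K A) (f : pObj Y ⟶ N) :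
    pEquiv Y N f = (pIso Y).hom ≫ (derQ K A).map f := rfl

/-- hom bijection -/
def iEquiv (N : HtpyCat K A) (Y : DerivedCat K A) : ((derQ K A).obj N ⟶ Y) ≃ (N ⟶ iObj Y) :=
  ((Equiv.ofBijective _ ((iObj_orth Y).map_bijective_of_isTriangulated (derQ K A) N)).trans
    (iIso Y).homToEquiv).symm

lemma iEquiv_symm_apply (N : HtpyCat K A) (Y : DerivedCat K A) (f : N ⟶ iObj Y) :
    (iEquiv N Y).symm f = (derQ K A).map f ≫ (iIso Y).hom := rfl

lemma pEquiv_nat (X : DerivedCat K A) (Y Y' : HtpyCat K A) (g : Y ⟶ Y') (h : pObj X ⟶ Y) :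
    pEquiv X Y' (h ≫ g) = pEquiv X Y h ≫ (derQ K A).map g := by
  rw [pEquiv_apply, pEquiv_apply, Functor.map_comp, Category.assoc]

lemma iEquiv_nat (X' X : HtpyCat K A) (Y : DerivedCat K A) (f : X' ⟶ X)
    (g : (derQ K A).obj X ⟶ Y) : iEquiv X' Y ((derQ K A).map f ≫ g) = f ≫ iEquiv X Y g := by
  rw [← Equiv.eq_symm_apply, iEquiv_symm_apply, Functor.map_comp, Category.assoc,
    ← iEquiv_symm_apply, Equiv.symm_apply_apply]

/-- left adjoint -/
def PiF (A : DGAlgebra K) : DerivedCat K A ⥤ HtpyCat K A :=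
  Adjunction.leftAdjointOfEquiv (G := derQ K A) pEquiv pEquiv_nat
/-- left adjunction -/
def adjP (A : DGAlgebra K) : PiF A ⊣ derQ K A := Adjunction.adjunctionOfEquivLeft pEquiv pEquiv_nat
/-- right adjoint -/
def UpF (A : DGAlgebra K) : DerivedCat K A ⥤ HtpyCat K A :=
  Adjunction.rightAdjointOfEquiv (F := derQ K A) iEquiv iEquiv_nat
/-- right adjunction -/
def adjU (A : DGAlgebra K) : derQ K A ⊣ UpF A := Adjunction.adjunctionOfEquivRight iEquiv iEquiv_nat

instance unitP : IsIso (adjP A).unit := by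
  have : ∀ Y, IsIso ((adjP A).unit.app Y) := fun Y => by
    have e : (adjP A).unit.app Y = (pIso Y).hom := by
      refine Eq.trans (b := pEquiv Y (pObj Y) (𝟙 _)) rfl ?_
      rw [pEquiv_apply, CategoryTheory.Functor.map_id, Category.comp_id]
    exact e ▸ (pIso Y).isIso_hom
  exact NatIso.isIso_of_isIso_app _

instance counitU : IsIso (adjU A).counit := by
  have : ∀ Y, IsIso ((adjU A).counit.app Y) := fun Y => by
    have e : (adjU A).counit.app Y = (iIso Y).hom := by
      refine Eq.trans (b := (iEquiv (iObj Y) Y).symm (𝟙 _)) rfl ?_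
      rw [iEquiv_symm_apply, CategoryTheory.Functor.map_id, Category.id_comp]
    exact e ▸ (iIso Y).isIso_hom
  exact NatIso.isIso_of_isIso_app _

instance csP : (PiF A).CommShift ℤ := (adjP A).leftAdjointCommShift ℤ
instance csaP : (adjP A).CommShift ℤ := (adjP A).commShift_of_rightAdjoint ℤ
instance csU : (UpF A).CommShift ℤ := (adjU A).rightAdjointCommShift ℤ
instance csaU : (adjU A).CommShift ℤ := (adjU A).commShift_of_leftAdjoint ℤ

/-- the witness -/
def theWitness (A : DGAlgebra K) : ResolutionAdjointsWitness K A where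
  shift_obj M := ⟨{ eqv := LinearEquiv.refl K _
                    deg := fun n x => Iff.rfl
                    act := fun x a => rfl
                    d := fun x => by
                      change sgn 1 • M.as.d x = - M.as.d x
                      simp [sgn_one] }⟩
  distH_of_conflation := distH_conf
  distD_char := distD_iff
  Pi := PiF A
  adjPi := adjP A
  trPi := (adjP A).isTriangulated_leftAdjoint
  fullPi := (adjP A).fullyFaithfulLOfIsIsoUnit.full
  faithfulPi := (adjP A).fullyFaithfulLOfIsIsoUnit.faithful
  imagePi Y := (htpyProj_iff _).2 (pObj_orth Y)
  Ups := UpF A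
  adjUps := adjU A
  trUps := (adjU A).isTriangulated_rightAdjoint
  fullUps := (adjU A).fullyFaithfulROfIsIsoCounit.full
  faithfulUps := (adjU A).fullyFaithfulROfIsIsoCounit.faithful
  imageUps Y := (htpyInj_iff _).2 (iObj_orth Y)
end

/-- The canonical localization functor
`q : H(A) → D(A)` from the homotopy category to the derived category has both a
left adjoint `Π` and a right adjoint `Υ`, both triangulated and fully faithful;
the essential image of `Π` consists of homotopically projective dg modules and
the essential image of `Υ` consists of homotopically injective dg modules. -/
theorem localization_has_triangulated_adjoints {K : Type} [CommRing K]
    (A : DGAlgebra K) : Nonempty (ResolutionAdjointsWitness K A) := by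
  exact ⟨theWitness A⟩

end
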